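/- arXiv:2308.16728 — 2 statements merged into one kernel-verified Lean document; each statement's English description precedes it below -/
import Mathlib

section
/- For every integer ℓ ≥ 2 there exists a constant C > 0 such that for every integer N there exists an integer r ≥ N satisfying f(r, C_{2ℓ}) ≤ C · r^{(3ℓ−2)/(3ℓ+2)} · (log r)^{3ℓ/(3ℓ+2)}, where C_{2ℓ} denotes the cycle of length 2ℓ. -/
open SimpleGraph

/-- `G` is an `(r,k)`-graph: its vertex set can be partitioned into `r` parts,
each of size at most `k`, with at least one edge between any two distinct parts. -/
def IsRKGraph {V : Type} [Fintype V] (G : SimpleGraph V) (r k : ℕ) : Prop :=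
  ∃ P : Fin r → Finset V,
    (∀ v : V, ∃! i, v ∈ P i) ∧
    (∀ i, (P i).card ≤ k) ∧
    ∀ i j : Fin r, i ≠ j → ∃ u ∈ P i, ∃ w ∈ P j, G.Adj u w

/-- `G` contains a subgraph isomorphic to `H`. -/
def ContainsSub {W V : Type} (H : SimpleGraph W) (G : SimpleGraph V) : Prop :=
  ∃ f : H →g G, Function.Injective f

/-- `f(r,H)`: the minimum `k` for which there exists an `H`-free `(r,k)`-graph. -/
noncomputable def fGraph {W : Type} (H : SimpleGraph W) (r : ℕ) : ℕ :=
  sInf {k | ∃ (n : ℕ) (G : SimpleGraph (Fin n)), ¬ ContainsSub H G ∧ IsRKGraph G r k}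

/-!
Let `F` be a finite field with `q` elements and `n = ⌊ℓ / 2⌋ + 1`. In the group of matrices in
`SL₂(F[X] / X ^ n)` that are upper unitriangular modulo `X`, take the subgroups `S₁` and `S₂` of
matrices `!![1, t; 0, 1]` and `!![1, 0; X * t, 1]`, `t ∈ F`, and join two cosets, one of each
subgroup, when they intersect. A cycle of length `2ℓ` in this graph would give two alternating words
of length `ℓ` with equal products, one starting in `S₁` and the other in `S₂`. Interleave the
coefficients of the two entries of the first row of such a product: over `F[X]` every letter raises
the degree of the resulting polynomial by one, except a first letter from `S₂`, which fixes the row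
`(1, 0)`. So the two words have degrees `ℓ` and `ℓ - 1`, and since both are less than `2n`, the
products still differ modulo `X ^ n`.

Let `K ⊇ S₁` be the kernel of the coefficient of `X` in the lower left entry. It has index `q` and
meets `S₂` trivially, so cosets of `S₁` lying in one coset of `K` have disjoint neighbourhoods.
Hence a part made of `k` cosets of `S₁` in a common coset of `K` has `kq` neighbours, and if the
cosets of `S₂` are distributed evenly among `qt` such parts by random cyclic shifts, then with
positive probability every part has a neighbour in every part, as long as `k / t > 2 log (qt)`.
-/

section UpperBounds

open Finset

variable {W : Type} {V R J Z ι : Type*} {H : SimpleGraph W} {G : SimpleGraph V} {k B m : ℕ}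

lemma not_containsSub_iff_free {V : Type} {G : SimpleGraph V} : ¬ ContainsSub H G ↔ H.Free G :=
  not_congr ⟨fun ⟨f, hf⟩ ↦ ⟨⟨f, hf⟩⟩, fun ⟨f⟩ ↦ ⟨f.toHom, f.injective⟩⟩

lemma fGraph_card_le_of_pairwise_disjoint [Fintype Z] (hG : H.Free G) (P : Z → Finset V)
    (hdisj : Pairwise (Function.onFun Disjoint P)) (hcard : ∀ z, #(P z) ≤ k)
    (hadj : ∀ z z', z ≠ z' → ∃ u ∈ P z, ∃ w ∈ P z', G.Adj u w) :
    fGraph H (Fintype.card Z) ≤ k := by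
  classical
  let U := univ.biUnion P
  let e : Fin (Fintype.card U) ≃ U := (Fintype.equivFin U).symm
  let f : Fin (Fintype.card U) ↪ V := e.toEmbedding.trans (Function.Embedding.subtype _)
  let ez : Fin (Fintype.card Z) ≃ Z := (Fintype.equivFin Z).symm
  have exists_preimage {z v} (hv : v ∈ P z) : ∃ a, f a = v := by
    refine ⟨e.symm ⟨v, mem_biUnion.2 ⟨z, mem_univ z, hv⟩⟩, ?_⟩
    simp [f]
  refine Nat.sInf_le ⟨_, G.comap f, ?_, fun i ↦ {a | f a ∈ P (ez i)}, fun a ↦ ?_, fun i ↦ ?_,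
    fun i j hij ↦ ?_⟩
  · exact not_containsSub_iff_free.2 fun h ↦ hG (h.trans ⟨(Embedding.comap f G).toCopy⟩)
  · obtain ⟨z, -, hz⟩ := mem_biUnion.1 (e a).2
    refine ⟨ez.symm z, by simpa [f] using hz, fun i hi ↦ ?_⟩
    by_contra hne
    refine disjoint_left.1 (hdisj fun h ↦ hne ?_) (mem_filter.1 hi).2 hz
    rw [← h, Equiv.symm_apply_apply]
  · refine (card_le_card_of_injOn f (fun a ha ↦ ?_) f.injective.injOn).trans (hcard (ez i))
    exact (mem_filter.1 ha).2
  · obtain ⟨u, hu, w, hw, huw⟩ := hadj _ _ (ez.injective.ne hij)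
    obtain ⟨a, rfl⟩ := exists_preimage hu
    obtain ⟨b, rfl⟩ := exists_preimage hw
    exact ⟨a, by simpa using hu, b, by simpa using hw, huw⟩

lemma card_shifts_avoiding_le [Fintype ι] [DecidableEq ι] [Fintype Z] [DecidableEq Z]
    [AddGroup Z] (N : Finset (ι × Z)) (c : Z) :
    (#{s : ι → Z | ∀ x ∈ N, x.2 + s x.1 ≠ c} : ℝ) ≤
      (Fintype.card Z : ℝ) ^ Fintype.card ι * Real.exp (-(#N / Fintype.card Z)) := by
  have : (0 : ℝ) < Fintype.card Z := mod_cast Fintype.card_pos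
  let T (b : ι) : Finset Z := ({x ∈ N | x.1 = b} : Finset (ι × Z)).image fun x ↦ -x.2 + c
  have card_T (b : ι) : #(T b) = #{x ∈ N | x.1 = b} := by
    refine card_image_of_injOn fun x hx y hy hxy ↦ ?_
    exact Prod.ext ((mem_filter.1 hx).2.trans (mem_filter.1 hy).2.symm) (by simpa using hxy)
  have avoiding_eq : ({s | ∀ x ∈ N, x.2 + s x.1 ≠ c} : Finset (ι → Z)) =
      Fintype.piFinset fun b ↦ (T b)ᶜ := by
    ext s
    simp only [T, mem_filter_univ, Fintype.mem_piFinset, mem_compl, mem_image, mem_filter (s := N)]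
    refine ⟨fun hs b ⟨x, ⟨hx, hxb⟩, hxs⟩ ↦ hs x hx ?_, fun hs x hx hxs ↦ hs x.1 ⟨x, ⟨hx, rfl⟩, ?_⟩⟩
    · rw [hxb, ← hxs, add_neg_cancel_left]
    · rw [← hxs, neg_add_cancel_left]
  have card_compl_T (b : ι) :
      (#(T b)ᶜ : ℝ) ≤ Fintype.card Z * Real.exp (-(#(T b) / Fintype.card Z)) := by
    rw [card_compl, Nat.cast_sub (card_le_univ _)]
    calc (Fintype.card Z - #(T b) : ℝ)
        = Fintype.card Z * (-(#(T b) / Fintype.card Z) + 1) := by field_simp; ring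
      _ ≤ _ := by gcongr; exact Real.add_one_le_exp _
  have sum_card_T : ∑ b, #(T b) = #N := by
    simp only [card_T]
    exact (card_eq_sum_card_fiberwise fun x _ ↦ mem_coe.2 (mem_univ x.1)).symm
  rw [avoiding_eq, Fintype.card_piFinset, Nat.cast_prod]
  calc ∏ b, (#(T b)ᶜ : ℝ)
      ≤ ∏ b, (Fintype.card Z * Real.exp (-(#(T b) / Fintype.card Z))) :=
        prod_le_prod (fun _ _ ↦ by positivity) fun b _ ↦ card_compl_T b
    _ = (Fintype.card Z : ℝ) ^ Fintype.card ι * Real.exp (-(#N / Fintype.card Z)) := by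
        rw [prod_mul_distrib, prod_const, card_univ, ← Real.exp_sum, sum_neg_distrib, ← sum_div,
          ← Nat.cast_sum, sum_card_T]

lemma exists_shift_forall_mem [Finite ι] [Fintype J] [Fintype Z] [AddGroup Z]
    (N : J → Finset (ι × Z)) (hN : ∀ j, m ≤ #(N j))
    (hexp : Fintype.card J * Fintype.card Z * Real.exp (-(m / Fintype.card Z)) < 1) :
    ∃ s : ι → Z, ∀ j c, ∃ x ∈ N j, x.2 + s x.1 = c := by
  classical
  have := Fintype.ofFinite ι
  by_contra! hs
  let bad (jc : J × Z) : Finset (ι → Z) := {s | ∀ x ∈ N jc.1, x.2 + s x.1 ≠ jc.2}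
  let E : ℝ := Fintype.card Z ^ Fintype.card ι
  have : 0 < E := pow_pos (mod_cast Fintype.card_pos) _
  have card_bad (jc) : (#(bad jc) : ℝ) ≤ E * Real.exp (-(m / Fintype.card Z)) := by
    refine (card_shifts_avoiding_le (N jc.1) jc.2).trans ?_
    gcongr
    exact hN jc.1
  have univ_subset : (univ : Finset (ι → Z)) ⊆ univ.biUnion bad := fun s _ ↦ by
    obtain ⟨j, c, h⟩ := hs s
    exact mem_biUnion.2 ⟨(j, c), mem_univ _, by simpa [bad] using h⟩
  have : E < E := calc
    E = #(univ : Finset (ι → Z)) := by simp [E]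
    _ ≤ ∑ jc, (#(bad jc) : ℝ) := mod_cast (card_le_card univ_subset).trans card_biUnion_le
    _ ≤ ∑ _jc : J × Z, E * Real.exp (-(m / Fintype.card Z)) := sum_le_sum fun jc _ ↦ card_bad jc
    _ = E * (Fintype.card J * Fintype.card Z * Real.exp (-(m / Fintype.card Z))) := by
      simp only [sum_const, card_univ, Fintype.card_prod, nsmul_eq_mul, Nat.cast_mul]
      ring
    _ < E * 1 := by gcongr
    _ = E := mul_one E
  exact this.false

lemma exists_balanced_coloring [Fintype R] [Fintype J] [Fintype Z] [DecidableEq Z] [Nonempty Z]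
    (hR : Fintype.card R ≤ B * Fintype.card Z) (N : J → Finset R) (hN : ∀ j, m ≤ #(N j))
    (hexp : Fintype.card J * Fintype.card Z * Real.exp (-(m / Fintype.card Z)) < 1) :
    ∃ col : R → Z, (∀ z, #{y | col y = z} ≤ B) ∧ ∀ j z, ∃ y ∈ N j, col y = z := by
  have : NeZero (Fintype.card Z) := ⟨Fintype.card_ne_zero⟩
  let _ : AddCommGroup Z := (Fintype.equivFin Z).addCommGroup
  obtain ⟨f⟩ : Nonempty (R ↪ Fin B × Z) := Function.Embedding.nonempty_of_card_le (by simpa)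
  obtain ⟨s, hs⟩ := exists_shift_forall_mem (fun j ↦ (N j).map f) (by simpa using hN) hexp
  refine ⟨fun y ↦ (f y).2 + s (f y).1, fun z ↦ ?_, fun j z ↦ by simpa using hs j z⟩
  calc #{y | (f y).2 + s (f y).1 = z}
      ≤ #(univ : Finset (Fin B)) := by
        refine card_le_card_of_injOn (fun y ↦ (f y).1) (by simp) fun y hy y' hy' h ↦ ?_
        simp only [coe_filter, mem_univ, true_and, Set.mem_ofPred_eq] at hy hy' h
        rw [h, ← hy', add_left_inj] at hy
        exact f.injective (Prod.ext h hy)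
    _ = B := card_fin B

/-- The vertices of the family `b` having a neighbour in `S`. -/
noncomputable def neighborsOf [Fintype R] (G : SimpleGraph V) (b : R → V) (S : Finset V) :
    Finset R :=
  open scoped Classical in {y | ∃ x ∈ S, G.Adj x (b y)}

lemma fGraph_card_le_of_card_neighborsOf [Fintype R] [Fintype Z] [Nonempty Z] (hG : H.Free G)
    (S : Z → Finset V) (b : R ↪ V) (hS : Pairwise (Function.onFun Disjoint S))
    (hSb : ∀ z y, b y ∉ S z) (hcard : ∀ z, #(S z) ≤ k) (hR : Fintype.card R ≤ B * Fintype.card Z)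
    (hm : ∀ z, m ≤ #(neighborsOf G b (S z)))
    (hexp : Fintype.card Z * Fintype.card Z * Real.exp (-(m / Fintype.card Z)) < 1) :
    fGraph H (Fintype.card Z) ≤ k + B := by
  classical
  obtain ⟨col, hcolB, hcol⟩ := exists_balanced_coloring hR (fun z ↦ neighborsOf G b (S z)) hm hexp
  let T (z : Z) : Finset V := ({y | col y = z} : Finset R).map b
  have disjoint_S_T (z z') : Disjoint (S z) (T z') := by
    refine disjoint_right.2 fun v hv ↦ ?_
    obtain ⟨y, -, rfl⟩ := mem_map.1 hv
    exact hSb z y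
  have disjoint_T {z z'} (h : z ≠ z') : Disjoint (T z) (T z') :=
    (disjoint_map b).2 <| disjoint_filter.2 fun y _ hz hz' ↦ h (hz.symm.trans hz')
  refine fGraph_card_le_of_pairwise_disjoint hG (fun z ↦ S z ∪ T z) (fun z z' h ↦ ?_) (fun z ↦ ?_)
    fun z z' _ ↦ ?_
  · simp only [Function.onFun, disjoint_union_left, disjoint_union_right]
    exact ⟨⟨hS h, (disjoint_S_T z' z).symm⟩, disjoint_S_T z z', disjoint_T h⟩
  · exact (card_union_le _ _).trans (add_le_add (hcard z) (by simpa [T] using hcolB z))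
  · obtain ⟨y, hy, hyz'⟩ := hcol z z'
    obtain ⟨x, hx, hxy⟩ := (mem_filter.1 hy).2
    exact ⟨x, mem_union_left _ hx, b y, mem_union_right _ <| mem_map_of_mem b <| by simpa, hxy⟩

end UpperBounds

section CosetGraph

open Finset

variable {G N : Type*} [Group G] [Group N]

/-- The incidence graph of the left cosets of `S true` and those of `S false`: two cosets of
different kinds are adjacent when they intersect. -/
def cosetGraph (S : Bool → Subgroup G) : SimpleGraph (Σ i, G ⧸ S i) where
  Adj x y := x.1 ≠ y.1 ∧ ∃ g : G, x.2 = g ∧ y.2 = g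
  symm := ⟨fun _ _ ⟨hne, g, hx, hy⟩ ↦ ⟨hne.symm, g, hy, hx⟩⟩
  loopless := ⟨fun _ h ↦ h.1 rfl⟩

/-- The product of the images of the entries of a list under `u i`, `u (!i)`, `u i`, … in turn. -/
def altProd (u : Bool → N →* G) : Bool → List N → G
  | _, [] => 1
  | i, t :: l => u i t * altProd u (!i) l

lemma map_altProd {G' : Type*} [Group G'] (f : G →* G') (u : Bool → N →* G) (i : Bool)
    (l : List N) : f (altProd u i l) = altProd (fun j ↦ f.comp (u j)) i l := by
  induction l generalizing i with
  | nil => exact map_one f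
  | cons t l ih => simp only [altProd, map_mul, ih, MonoidHom.comp_apply]

lemma exists_altProd_eq (u : Bool → N →* G) (n : ℕ) {g : ℕ → G} {s : ℕ → Bool}
    (hs : ∀ j, s (j + 1) = !s j) (hmem : ∀ j, (g j)⁻¹ * g (j + 1) ∈ (u (s j)).range)
    (hne : ∀ j, g j ≠ g (j + 1)) :
    ∃ l : List N, l.length = n ∧ 1 ∉ l ∧ altProd u (s 0) l = (g 0)⁻¹ * g n := by
  induction n generalizing g s with
  | zero => exact ⟨[], rfl, List.not_mem_nil, by simp [altProd]⟩
  | succ n ih =>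
    obtain ⟨l, hlen, hl, hprod⟩ := ih (g := fun j ↦ g (j + 1)) (s := fun j ↦ s (j + 1))
      (fun j ↦ hs _) (fun j ↦ hmem _) fun j ↦ hne _
    obtain ⟨t, ht⟩ := hmem 0
    have t_ne_one : t ≠ 1 := by
      rintro rfl
      exact hne 0 (inv_mul_eq_one.1 (ht.symm.trans (map_one _)))
    refine ⟨t :: l, by simp [hlen], by simp [hl, t_ne_one.symm], ?_⟩
    rw [altProd, ← hs, hprod, ht]
    group

lemma exists_cycle_of_cycleGraph_isContained {V : Type*} {Γ : SimpleGraph V} {n : ℕ} (hn : 2 ≤ n)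
    (h : cycleGraph n ⊑ Γ) :
    ∃ c : ZMod n → V, Function.Injective c ∧ ∀ j, Γ.Adj (c j) (c (j + 1)) := by
  obtain ⟨f⟩ := h
  obtain ⟨m, rfl⟩ := Nat.exists_eq_add_of_le' hn
  exact ⟨f, f.injective, fun j ↦ f.toHom.map_adj <| cycleGraph_adj.2 <| .inr <|
    add_sub_cancel_left (G := ZMod (m + 2)) j 1⟩

lemma exists_edge_labels {S : Bool → Subgroup G} {n : ℕ} (hn : 3 ≤ n)
    (h : cycleGraph n ⊑ cosetGraph S) :
    ∃ (e : ZMod n → G) (s : ZMod n → Bool), (∀ j, s (j + 1) = !s j) ∧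
      (∀ j, (e j)⁻¹ * e (j + 1) ∈ S (s j)) ∧ ∀ j, e j ≠ e (j + 1) := by
  obtain ⟨c, hc, hadj⟩ := exists_cycle_of_cycleGraph_isContained (by lia) h
  choose hside e he he' using hadj
  have side_succ (j) : (c (j + 1)).1 = !(c j).1 := Bool.eq_not.2 (hside j).symm
  refine ⟨e, fun j ↦ (c (j + 1)).1, fun j ↦ side_succ _, fun j ↦ ?_, fun j hj ↦ ?_⟩
  · exact QuotientGroup.eq.1 ((he' j).symm.trans (he (j + 1)))
  · have side_eq : (c j).1 = (c (j + 1 + 1)).1 := by simp [side_succ]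
    have c_eq : c j = c (j + 1 + 1) := by
      refine Sigma.ext side_eq ?_
      rw [he j, he' (j + 1), ← hj, side_eq]
    have two_eq_zero : ((2 : ℕ) : ZMod n) = 0 := by
      simpa [add_assoc, one_add_one_eq_two] using hc c_eq
    have := Nat.le_of_dvd two_pos ((ZMod.natCast_eq_zero_iff _ _).1 two_eq_zero)
    lia

theorem cycleGraph_free_cosetGraph {ℓ : ℕ} (hℓ : 2 ≤ ℓ) (u : Bool → N →* G)
    (hu : ∀ l l' : List N, l.length = ℓ → l'.length = ℓ → 1 ∉ l → 1 ∉ l' →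
      altProd u true l ≠ altProd u false l') :
    (cycleGraph (2 * ℓ)).Free (cosetGraph fun i ↦ (u i).range) := by
  intro h
  obtain ⟨e, s, hs, he, hne⟩ := exists_edge_labels (by lia) h
  -- The two ways around the cycle from an edge to the opposite one spell words with equal product.
  have antipode : e (-(ℓ : ℕ)) = e (ℓ : ℕ) := by
    congr 1
    rw [neg_eq_iff_add_eq_zero, ← Nat.cast_add, ← two_mul, ZMod.natCast_self]
  have neg_succ (n : ℕ) : (-(n : ZMod (2 * ℓ))) = -(n + 1 : ℕ) + 1 := by push_cast; ring
  obtain ⟨l, hlen, hl, hprod⟩ := exists_altProd_eq u ℓ (g := fun n ↦ e n) (s := fun n ↦ s n)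
    (fun n ↦ by simp [hs]) (fun n ↦ by simpa using he n) fun n ↦ by simpa using hne n
  obtain ⟨l', hlen', hl', hprod'⟩ := exists_altProd_eq u ℓ (g := fun n ↦ e (-n))
    (s := fun n ↦ s (-(n + 1 : ℕ)))
    (fun n ↦ by rw [neg_succ (n + 1), hs, Bool.not_not])
    (fun n ↦ by simpa only [mul_inv_rev, inv_inv, ← neg_succ] using inv_mem (he (-(n + 1 : ℕ))))
    fun n ↦ by simpa only [← neg_succ] using (hne (-(n + 1 : ℕ))).symm
  have altProd_eq : altProd u (s 0) l = altProd u (!s 0) l' := by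
    have hs0 : s (-(0 + 1 : ℕ)) = !s 0 := by simpa [eq_comm] using congrArg not (hs (-1))
    calc altProd u (s 0) l = (e 0)⁻¹ * e (ℓ : ℕ) := by simpa using hprod
      _ = altProd u (!s 0) l' := by rw [← hs0, hprod', antipode]; simp
  cases hs0 : s 0 <;> rw [hs0] at altProd_eq
  · exact hu l' l hlen' hlen hl' hl altProd_eq.symm
  · exact hu l l' hlen hlen' hl hl' altProd_eq

variable {S : Bool → Subgroup G} {K : Subgroup G}

lemma card_mul_card_le_card_neighborsOf [Finite G] [Fintype (G ⧸ S false)] (hSK : S true ≤ K)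
    (hinf : Disjoint K (S false)) (P : Finset (G ⧸ S true)) {i : G ⧸ K}
    (hP : ∀ x ∈ P, Subgroup.quotientMapOfLE hSK x = i) :
    #P * Nat.card (S true) ≤ #(neighborsOf (cosetGraph S) (Sigma.mk false)
      (P.map (Function.Embedding.sigmaMk true))) := by
  classical
  have := Fintype.ofFinite (S true)
  rw [Nat.card_eq_fintype_card, ← card_univ, ← card_product]
  refine card_le_card_of_injOn (fun xa ↦ ((xa.1.out * xa.2 : G) : G ⧸ S false)) ?_ ?_
  · rintro ⟨x, a⟩ hxa
    have hx := (mem_product.1 hxa).1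
    refine mem_filter.2 ⟨mem_univ _, ⟨true, x⟩, by simpa, by simp, x.out * a, ?_, rfl⟩
    simp [QuotientGroup.mk_mul_of_mem _ a.2]
  · rintro ⟨x, a⟩ hxa ⟨x', a'⟩ hxa' h
    have hB : (x.out * a)⁻¹ * (x'.out * a' : G) ∈ S false := QuotientGroup.eq.1 h
    have out_mem {x} (hx : x ∈ P) : ((x.out : G) : G ⧸ K) = i := by
      rw [← hP x hx]
      nth_rw 2 [← Quotient.out_eq' x]
      rfl
    have hK : (x.out * a)⁻¹ * (x'.out * a' : G) ∈ K := by
      rw [← QuotientGroup.eq, QuotientGroup.mk_mul_of_mem _ (hSK a.2),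
        QuotientGroup.mk_mul_of_mem _ (hSK a'.2), out_mem (mem_product.1 hxa).1,
        out_mem (mem_product.1 hxa').1]
    have heq : (x.out * a : G) = x'.out * a' := by
      rw [← inv_mul_eq_one]
      exact Subgroup.disjoint_def.1 hinf hK hB
    obtain rfl : x = x' := by
      rw [← QuotientGroup.out_eq' x, ← QuotientGroup.out_eq' x',
        ← QuotientGroup.mk_mul_of_mem x.out a.2, heq, QuotientGroup.mk_mul_of_mem _ a'.2]
    exact Prod.ext rfl (Subtype.ext (mul_left_cancel heq))

lemma exists_disjoint_finsets_in_fibers [Finite G] {A K : Subgroup G} {t k : ℕ} (hAK : A ≤ K)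
    (hk : t * k ≤ A.relIndex K) :
    ∃ P : (G ⧸ K) × Fin t → Finset (G ⧸ A), Pairwise (Function.onFun Disjoint P) ∧
      ∀ z, #(P z) = k ∧ ∀ x ∈ P z, Subgroup.quotientMapOfLE hAK x = z.1 := by
  classical
  let e := Subgroup.quotientEquivProdOfLE hAK
  have := Fintype.ofFinite (K ⧸ A.subgroupOf K)
  obtain ⟨f⟩ : Nonempty (Fin t × Fin k ↪ K ⧸ A.subgroupOf K) :=
    Function.Embedding.nonempty_of_card_le <| by
      simpa [Subgroup.relIndex, Subgroup.index, Nat.card_eq_fintype_card] using hk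
  let p (z : (G ⧸ K) × Fin t) : Fin k ↪ G ⧸ A :=
    ⟨fun κ ↦ e.symm (z.1, f (z.2, κ)), fun κ κ' h ↦ by simpa using h⟩
  refine ⟨fun z ↦ univ.map (p z), fun z z' hz ↦ ?_, fun z ↦ ⟨by simp, fun x hx ↦ ?_⟩⟩
  · refine disjoint_left.2 fun x hx hx' ↦ hz ?_
    obtain ⟨κ, -, rfl⟩ := mem_map.1 hx
    obtain ⟨κ', -, h⟩ := mem_map.1 hx'
    have := e.symm.injective h
    simp only [Prod.mk.injEq, EmbeddingLike.apply_eq_iff_eq] at this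
    exact Prod.ext this.1.symm this.2.1.symm
  · obtain ⟨κ, -, rfl⟩ := mem_map.1 hx
    exact congrArg Prod.fst (e.apply_symm_apply (z.1, f (z.2, κ)))

theorem fGraph_index_mul_le [Finite G] {W : Type} {H : SimpleGraph W} {t k B : ℕ} [NeZero t]
    (hH : H.Free (cosetGraph S)) (hSK : S true ≤ K) (hinf : Disjoint K (S false))
    (hk : t * k ≤ (S true).relIndex K) (hB : (S false).index ≤ B * (K.index * t))
    (hexp : ((K.index * t : ℕ) : ℝ) ^ 2 *
      Real.exp (-((k * Nat.card (S true) : ℕ) / (K.index * t : ℕ))) < 1) :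
    fGraph H (K.index * t) ≤ k + B := by
  have := Fintype.ofFinite (G ⧸ K)
  have := Fintype.ofFinite (G ⧸ S false)
  have card_Z : Fintype.card ((G ⧸ K) × Fin t) = K.index * t := by
    simp [Subgroup.index, Nat.card_eq_fintype_card]
  obtain ⟨P, hdisj, hP⟩ := exists_disjoint_finsets_in_fibers hSK hk
  rw [← card_Z] at hB hexp ⊢
  refine fGraph_card_le_of_card_neighborsOf hH
    (fun z ↦ (P z).map (Function.Embedding.sigmaMk true)) (Function.Embedding.sigmaMk false)
    (fun z z' h ↦ (disjoint_map _).2 (hdisj h)) (fun z y ↦ ?_) (fun z ↦ ?_) ?_ (fun z ↦ ?_)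
    (by rwa [← sq])
  · simp
  · rw [card_map, (hP z).1]
  · rwa [← Nat.card_eq_fintype_card]
  · rw [← (hP z).1]
    exact card_mul_card_le_card_neighborsOf hSK hinf (P z) (hP z).2

end CosetGraph

section Words

open Polynomial Matrix MatrixGroups

variable {A A' : Type*} (F : Type*) [CommRing F] [CommRing A] [CommRing A'] [Algebra F A]
  [Algebra F A']

/-- The two families of elementary matrices `!![1, t; 0, 1]` (for `true`) and `!![1, 0; x * t, 1]`
(for `false`), with `t` in the base ring, as homomorphisms from its additive group. -/
def elementary (x : A) : Bool → Multiplicative F →* SL(2, A)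
  | true => MonoidHom.mk'
      (fun t ↦ Matrix.SpecialLinearGroup.transvection zero_ne_one (algebraMap F A t.toAdd))
      fun s t ↦ by rw [toAdd_mul, map_add, Matrix.SpecialLinearGroup.transvection_add]
  | false => MonoidHom.mk'
      (fun t ↦ Matrix.SpecialLinearGroup.transvection one_ne_zero (x * algebraMap F A t.toAdd))
      fun s t ↦ by rw [toAdd_mul, map_add, mul_add, Matrix.SpecialLinearGroup.transvection_add]

variable {F}

lemma val_elementary_true (x : A) (t : Multiplicative F) :
    (elementary F x true t).1 = !![1, algebraMap F A t.toAdd; 0, 1] := by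
  change transvection 0 1 (algebraMap F A t.toAdd) = _
  ext i j
  fin_cases i <;> fin_cases j <;> simp [transvection]

lemma val_elementary_false (x : A) (t : Multiplicative F) :
    (elementary F x false t).1 = !![1, 0; x * algebraMap F A t.toAdd, 1] := by
  change transvection 1 0 (x * algebraMap F A t.toAdd) = _
  ext i j
  fin_cases i <;> fin_cases j <;> simp [transvection]

lemma map_comp_elementary (f : A →ₐ[F] A') (x : A) (i : Bool) :
    (Matrix.SpecialLinearGroup.map f.toRingHom).comp (elementary F x i) =
      elementary F (f x) i := by
  ext t j k
  cases i <;> fin_cases j <;> fin_cases k <;> simp [val_elementary_true, val_elementary_false]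

/-- The even (for `true`) or odd (for `false`) part of the polynomial obtained by interleaving the
coefficients of the two entries of `v`. -/
noncomputable def interleavePart (v : Fin 2 → F[X]) : Bool → F[X]
  | true => expand F 2 (v 0)
  | false => X * expand F 2 (v 1)

lemma interleavePart_vecMul_self (v : Fin 2 → F[X]) (i : Bool) (t : Multiplicative F) :
    interleavePart (v ᵥ* (elementary F X i t).1) i = interleavePart v i := by
  cases i <;> simp [interleavePart, val_elementary_true, val_elementary_false, vecMul, dotProduct]

lemma interleavePart_vecMul_not (v : Fin 2 → F[X]) (i : Bool) (t : Multiplicative F) :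
    interleavePart (v ᵥ* (elementary F X i t).1) (!i) =
      interleavePart v (!i) + C t.toAdd * X * interleavePart v i := by
  cases i <;>
    simp [interleavePart, val_elementary_true, val_elementary_false, vecMul, dotProduct] <;> ring

/-- The polynomial whose even and odd coefficients are those of `v 0` and `v 1`. -/
noncomputable def interleave (v : Fin 2 → F[X]) : F[X] :=
  interleavePart v true + interleavePart v false

lemma interleave_eq_add_not (v : Fin 2 → F[X]) (i : Bool) :
    interleave v = interleavePart v i + interleavePart v (!i) := by
  cases i
  · exact add_comm _ _
  · rfl

lemma interleave_sub (v w : Fin 2 → F[X]) : interleave (v - w) = interleave v - interleave w := by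
  simp only [interleave, interleavePart, Pi.sub_apply, map_sub]
  ring

lemma X_pow_two_mul_dvd_interleave {n : ℕ} {v : Fin 2 → F[X]} (hv : ∀ j, X ^ n ∣ v j) :
    X ^ (2 * n) ∣ interleave v := by
  have dvd_expand (j) : X ^ (2 * n) ∣ expand F 2 (v j) := by
    simpa [pow_mul] using map_dvd (expand F 2) (hv j)
  exact dvd_add (dvd_expand 0) ((dvd_expand 1).mul_left X)

-- Each letter adds a linear multiple of the dominant part to the other one, which becomes dominant.
lemma natDegree_interleave_vecMul_altProd [IsDomain F] {l : List (Multiplicative F)} (hl : 1 ∉ l)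
    {v : Fin 2 → F[X]} {i : Bool}
    (hv : (interleavePart v !i).degree < (interleavePart v i).degree) :
    (interleave (v ᵥ* (altProd (elementary F X) i l).1)).natDegree =
      (interleavePart v i).natDegree + l.length := by
  induction l generalizing v i with
  | nil =>
    rw [altProd, Matrix.SpecialLinearGroup.coe_one, vecMul_one, List.length_nil, add_zero,
      interleave_eq_add_not v i, natDegree_add_eq_left_of_degree_lt hv]
  | cons t l ih =>
    obtain ⟨ht, hl⟩ : 1 ≠ t ∧ 1 ∉ l := by simpa using hl
    have t_ne_zero : t.toAdd ≠ 0 := Ne.symm ht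
    have part_ne_zero : interleavePart v i ≠ 0 := ne_zero_of_degree_gt hv
    let w := v ᵥ* (elementary F X i t).1
    have part_self : interleavePart w i = interleavePart v i := interleavePart_vecMul_self v i t
    have degree_step :
        (C t.toAdd * X * interleavePart v i).degree = (interleavePart v i).degree + 1 := by
      rw [degree_mul, degree_C_mul_X t_ne_zero, add_comm]
    have lt_step : (interleavePart v i).degree < (interleavePart v i).degree + 1 := by
      simpa using degree_lt_degree_mul_X part_ne_zero
    have degree_part_not : (interleavePart w !i).degree = (interleavePart v i).degree + 1 := by
      rw [interleavePart_vecMul_not, degree_add_eq_right_of_degree_lt, degree_step]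
      exact degree_step ▸ hv.trans lt_step
    have hw : (interleavePart w !!i).degree < (interleavePart w !i).degree := by
      rwa [Bool.not_not, part_self, degree_part_not]
    have natDegree_part_not :
        (interleavePart w !i).natDegree = (interleavePart v i).natDegree + 1 := by
      refine natDegree_eq_of_degree_eq_some ?_
      rw [degree_part_not, degree_eq_natDegree part_ne_zero]
      rfl
    rw [altProd, Matrix.SpecialLinearGroup.coe_mul, ← vecMul_vecMul, ih hl hw, natDegree_part_not,
      List.length_cons]
    ring

lemma natDegree_interleave_row_true [IsDomain F] {l : List (Multiplicative F)} (hl : 1 ∉ l) :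
    (interleave ((altProd (elementary F (X : F[X])) true l).1.row 0)).natDegree = l.length := by
  have := natDegree_interleave_vecMul_altProd hl (v := Pi.single 0 1) (i := true)
    (by simp [interleavePart])
  simpa [interleavePart] using this

lemma natDegree_interleave_row_false [IsDomain F] {l : List (Multiplicative F)} (hl : 1 ∉ l) :
    (interleave ((altProd (elementary F (X : F[X])) false l).1.row 0)).natDegree =
      l.length - 1 := by
  cases l with
  | nil => simp [altProd, interleave, interleavePart]
  | cons t l =>
    obtain ⟨-, hl⟩ : 1 ≠ t ∧ 1 ∉ l := by simpa using hl
    have row_eq : (altProd (elementary F (X : F[X])) false (t :: l)).1.row 0 =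
        (altProd (elementary F (X : F[X])) true l).1.row 0 := by
      ext1 j
      simp [altProd, val_elementary_false, vecMul, dotProduct]
    rw [row_eq, natDegree_interleave_row_true hl, List.length_cons, Nat.add_sub_cancel]

theorem altProd_elementary_root_ne [IsDomain F] {n : ℕ} {l l' : List (Multiplicative F)}
    (hlen : l'.length = l.length) (hpos : 0 < l.length) (hn : l.length < 2 * n) (hl : 1 ∉ l)
    (hl' : 1 ∉ l') :
    altProd (elementary F (AdjoinRoot.root (X ^ n : F[X]))) true l ≠
      altProd (elementary F (AdjoinRoot.root (X ^ n : F[X]))) false l' := by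
  intro h
  have elementary_root (i) : elementary F (AdjoinRoot.root (X ^ n : F[X])) i =
      (Matrix.SpecialLinearGroup.map (AdjoinRoot.mkₐ (X ^ n : F[X])).toRingHom).comp
        (elementary F X i) := by
    rw [map_comp_elementary]
    rfl
  rw [funext elementary_root, ← map_altProd, ← map_altProd] at h
  set g := altProd (elementary F (X : F[X])) true l
  set g' := altProd (elementary F (X : F[X])) false l'
  have dvd_row (j) : X ^ n ∣ (g.1.row 0 - g'.1.row 0) j := by
    refine AdjoinRoot.mk_eq_mk.1 ?_
    simpa using congr_fun₂ (congrArg Subtype.val h) 0 j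
  have dvd : X ^ (2 * n) ∣ interleave (g.1.row 0) - interleave (g'.1.row 0) :=
    interleave_sub (g.1.row 0) (g'.1.row 0) ▸ X_pow_two_mul_dvd_interleave dvd_row
  have natDegree_g : (interleave (g.1.row 0)).natDegree = l.length :=
    natDegree_interleave_row_true hl
  have natDegree_g' : (interleave (g'.1.row 0)).natDegree = l.length - 1 :=
    hlen ▸ natDegree_interleave_row_false hl'
  have eq : interleave (g.1.row 0) = interleave (g'.1.row 0) := by
    refine sub_eq_zero.1 <| eq_zero_of_dvd_of_natDegree_lt dvd ?_
    grw [natDegree_X_pow, natDegree_sub_le]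
    lia
  have := congrArg natDegree eq
  lia

end Words

section ResiduallyUnipotent

open Polynomial Matrix MatrixGroups DualNumber

variable {F R : Type*} [CommRing F] [CommRing R] [Algebra F R]

/-- The group of matrices that become upper unitriangular under the augmentation `φ`. -/
def residuallyUnipotent (φ : R →ₐ[F] F) : Subgroup SL(2, R) where
  carrier := {g | φ (g.1 1 0) = 0 ∧ φ (g.1 0 0) = 1 ∧ φ (g.1 1 1) = 1}
  one_mem' := by simp
  mul_mem' {g h} hg hh := by
    simp only [Set.mem_ofPred_eq] at hg hh
    simp [mul_apply, Fin.sum_univ_two, hg, hh]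
  inv_mem' {g} hg := by
    simp only [Set.mem_ofPred_eq] at hg
    simp [Matrix.SpecialLinearGroup.coe_inv, adjugate_fin_two, hg]

variable {φ : R →ₐ[F] F}

lemma mem_residuallyUnipotent {g : SL(2, R)} :
    g ∈ residuallyUnipotent φ ↔ φ (g.1 1 0) = 0 ∧ φ (g.1 0 0) = 1 ∧ φ (g.1 1 1) = 1 :=
  Iff.rfl

lemma elementary_mem_residuallyUnipotent {x : R} (hx : φ x = 0) (i : Bool)
    (t : Multiplicative F) : elementary F x i t ∈ residuallyUnipotent φ := by
  cases i <;> simp [mem_residuallyUnipotent, val_elementary_true, val_elementary_false, hx]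

lemma card_residuallyUnipotent (hφ : ∀ a, φ a = 0 → IsNilpotent a) :
    Nat.card (residuallyUnipotent φ) = Nat.card (RingHom.ker φ) ^ 2 * Nat.card R := by
  let entries (g : residuallyUnipotent φ) : RingHom.ker φ × RingHom.ker φ × R :=
    (⟨g.1.1 0 0 - 1, by simp [g.2.2.1]⟩, ⟨g.1.1 1 0, g.2.1⟩, g.1.1 0 1)
  have entries_bijective : Function.Bijective entries := by
    refine ⟨fun ⟨g, hg⟩ ⟨h, hh⟩ hgh ↦ ?_, fun ⟨⟨a, ha⟩, ⟨c, hc⟩, b⟩ ↦ ?_⟩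
    · obtain ⟨h00, h10, h01⟩ : g.1 0 0 = h.1 0 0 ∧ g.1 1 0 = h.1 1 0 ∧ g.1 0 1 = h.1 0 1 := by
        simpa [entries, Subtype.ext_iff] using hgh
      have isUnit_entry : IsUnit (g.1 0 0) := by
        simpa using (hφ (g.1 0 0 - 1) (by simp [hg.2.1])).isUnit_one_add
      have h11 : g.1 1 1 = h.1 1 1 := by
        refine isUnit_entry.mul_left_cancel ?_
        have det_g := g.2
        have det_h := h.2
        rw [det_fin_two] at det_g det_h
        rw [← h00, ← h10, ← h01] at det_h
        linear_combination det_g - det_h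
      ext j k
      fin_cases j <;> fin_cases k <;> assumption
    · obtain ⟨v, hv⟩ := (hφ a ha).isUnit_one_add.exists_right_inv
      have hv1 : φ v = 1 := by simpa [show φ a = 0 from ha] using congrArg φ hv
      refine ⟨⟨⟨!![1 + a, b; c, v * (1 + b * c)], ?_⟩, ?_⟩, ?_⟩
      · rw [det_fin_two_of]
        linear_combination (1 + b * c) * hv
      · exact mem_residuallyUnipotent.2 <| by simp_all
      · simp [entries]
  rw [Nat.card_eq_of_bijective entries entries_bijective, Nat.card_prod, Nat.card_prod]
  ring

lemma card_ker_mul_card (φ : R →ₐ[F] F) : Nat.card (RingHom.ker φ) * Nat.card F = Nat.card R := by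
  have surj : Function.Surjective φ := fun t ↦ ⟨algebraMap F R t, by simp⟩
  rw [Submodule.card_eq_card_quotient_mul_card (RingHom.ker φ),
    Nat.card_congr (Ideal.quotientKerAlgEquivOfSurjective surj).toEquiv]

/-- The first-order part of the lower left entry, a character of the residually unipotent group. -/
def lowerLeftChar (e : R →ₐ[F] F[ε]) :
    residuallyUnipotent ((TrivSqZeroExt.fstHom F F F).comp e) →* Multiplicative F :=
  MonoidHom.mk' (fun g ↦ .ofAdd (e (g.1.1 1 0)).snd) fun g h ↦ by
    have hg : _ ∧ _ ∧ (e (g.1.1 1 1)).fst = 1 := g.2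
    have hh : (e (h.1.1 1 0)).fst = 0 ∧ (e (h.1.1 0 0)).fst = 1 ∧ _ := h.2
    have hg0 : (e (g.1.1 1 0)).fst = 0 := g.2.1
    rw [← ofAdd_add]
    simp [mul_apply, Fin.sum_univ_two, hg, hh, hg0]

variable {e : R →ₐ[F] F[ε]} {x : R} (hx : e x = ε)

/-- The homomorphisms `elementary F x i`, with values in the residually unipotent group. -/
def unipotentLetter (i : Bool) :
    Multiplicative F →* residuallyUnipotent ((TrivSqZeroExt.fstHom F F F).comp e) :=
  (elementary F x i).codRestrict _ <|
    elementary_mem_residuallyUnipotent (show (e x).fst = 0 by rw [hx, fst_eps]) i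

lemma lowerLeftChar_unipotentLetter_true (t : Multiplicative F) :
    lowerLeftChar e (unipotentLetter hx true t) = 1 := by
  simp [lowerLeftChar, unipotentLetter, val_elementary_true]

lemma lowerLeftChar_unipotentLetter_false (t : Multiplicative F) :
    lowerLeftChar e (unipotentLetter hx false t) = t := by
  simp [lowerLeftChar, unipotentLetter, val_elementary_false, hx,
    TrivSqZeroExt.algebraMap_eq_inl]

lemma unipotentLetter_injective (i : Bool) : Function.Injective (unipotentLetter hx i) := by
  cases i
  · exact Function.LeftInverse.injective (lowerLeftChar_unipotentLetter_false hx)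
  · refine Function.LeftInverse.injective (g := fun g ↦ .ofAdd (e (g.1.1 0 1)).fst) fun t ↦ ?_
    simp [unipotentLetter, val_elementary_true, TrivSqZeroExt.algebraMap_eq_inl]

lemma range_unipotentLetter_true_le_ker :
    (unipotentLetter hx true).range ≤ (lowerLeftChar e).ker := by
  rintro _ ⟨t, rfl⟩
  exact lowerLeftChar_unipotentLetter_true hx t

lemma disjoint_ker_range_unipotentLetter_false :
    Disjoint (lowerLeftChar e).ker (unipotentLetter hx false).range := by
  refine Subgroup.disjoint_def.2 ?_
  rintro _ h ⟨t, rfl⟩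
  obtain rfl : t = 1 := (lowerLeftChar_unipotentLetter_false hx t).symm.trans h
  exact map_one _

include hx in
lemma index_ker_lowerLeftChar : (lowerLeftChar e).ker.index = Nat.card F := by
  have surj : Function.Surjective (lowerLeftChar e) :=
    fun t ↦ ⟨_, lowerLeftChar_unipotentLetter_false hx t⟩
  rw [Subgroup.index_ker, MonoidHom.range_eq_top.2 surj, Subgroup.card_top,
    Nat.card_congr Multiplicative.toAdd]

end ResiduallyUnipotent

section TruncatedPolynomial

open Polynomial Matrix MatrixGroups DualNumber

variable {F : Type*} [CommRing F] {n : ℕ}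

lemma isNilpotent_of_map_root_eq_zero {φ : AdjoinRoot (X ^ n : F[X]) →ₐ[F] F}
    (hφ : φ (AdjoinRoot.root _) = 0) {a : AdjoinRoot (X ^ n : F[X])} (ha : φ a = 0) :
    IsNilpotent a := by
  obtain ⟨p, rfl⟩ := AdjoinRoot.mk_surjective a
  have coeff_zero : p.coeff 0 = 0 := by
    rw [← AdjoinRoot.aeval_eq, ← aeval_algHom_apply, hφ] at ha
    simpa [coeff_zero_eq_aeval_zero] using ha
  obtain ⟨r, rfl⟩ := X_dvd_iff.2 coeff_zero
  refine ⟨n, ?_⟩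
  rw [← map_pow, AdjoinRoot.mk_eq_zero, mul_pow]
  exact dvd_mul_right _ _

lemma card_adjoinRoot_X_pow [Nontrivial F] :
    Nat.card (AdjoinRoot (X ^ n : F[X])) = Nat.card F ^ n := by
  rw [Nat.card_congr (AdjoinRoot.powerBasis' (monic_X_pow n)).basis.equivFun.toEquiv, Nat.card_fun,
    Nat.card_fin, AdjoinRoot.powerBasis'_dim, natDegree_X_pow]

lemma card_residuallyUnipotent_adjoinRoot_X_pow [Nontrivial F] [Finite F] (hn : n ≠ 0)
    {φ : AdjoinRoot (X ^ n : F[X]) →ₐ[F] F} (hφ : φ (AdjoinRoot.root _) = 0) :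
    Nat.card (residuallyUnipotent φ) = Nat.card F ^ (3 * n - 2) := by
  have card_ker : Nat.card (RingHom.ker φ) = Nat.card F ^ (n - 1) := by
    refine Nat.mul_right_cancel (Nat.card_pos (α := F)) ?_
    rw [card_ker_mul_card, card_adjoinRoot_X_pow, pow_sub_one_mul hn]
  rw [card_residuallyUnipotent fun a ↦ isNilpotent_of_map_root_eq_zero hφ, card_ker,
    card_adjoinRoot_X_pow, ← pow_mul, ← pow_add]
  congr 1
  lia

/-- The truncation modulo `X ^ 2`, with values in the dual numbers. -/
noncomputable def toDualNumber (hn : 2 ≤ n) : AdjoinRoot (X ^ n : F[X]) →ₐ[F] F[ε] :=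
  AdjoinRoot.liftAlgHom _ (Algebra.ofId F F[ε]) ε <| by
    rw [eval₂_X_pow, pow_eq_zero_of_le hn (by rw [sq, eps_mul_eps])]

lemma toDualNumber_root (hn : 2 ≤ n) :
    toDualNumber hn (AdjoinRoot.root (X ^ n : F[X])) = ε :=
  AdjoinRoot.liftAlgHom_root _ _ _ _

lemma cycleGraph_free_cosetGraph_unipotentLetter [IsDomain F] {ℓ : ℕ} (hℓ : 2 ≤ ℓ)
    (hn : ℓ < 2 * n) {e : AdjoinRoot (X ^ n : F[X]) →ₐ[F] F[ε]}
    (he : e (AdjoinRoot.root _) = ε) :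
    (cycleGraph (2 * ℓ)).Free (cosetGraph fun i ↦ (unipotentLetter he i).range) := by
  refine cycleGraph_free_cosetGraph hℓ _ fun l l' hlen hlen' hl hl' h ↦ ?_
  have altProd_eq := congrArg (Subgroup.subtype _) h
  rw [map_altProd, map_altProd] at altProd_eq
  exact altProd_elementary_root_ne (hlen'.trans hlen.symm) (by lia) (by lia) hl hl' altProd_eq

theorem fGraph_cycleGraph_card_mul_le [IsDomain F] [Finite F] {ℓ t k B : ℕ} [NeZero t]
    (hℓ : 2 ≤ ℓ) (hn : ℓ < 2 * n) (hk : t * k ≤ Nat.card F ^ (3 * n - 4))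
    (hB : Nat.card F ^ (3 * n - 4) ≤ B * t)
    (hexp : ((Nat.card F * t : ℕ) : ℝ) ^ 2 * Real.exp (-(k / t)) < 1) :
    fGraph (cycleGraph (2 * ℓ)) (Nat.card F * t) ≤ k + B := by
  let q := Nat.card F
  have hq : 0 < q := Nat.card_pos
  have hn2 : 2 ≤ n := by lia
  have he := toDualNumber_root (F := F) hn2
  let 𝔊 := residuallyUnipotent ((TrivSqZeroExt.fstHom F F F).comp (toDualNumber hn2))
  have card_𝔊 : Nat.card 𝔊 = q ^ (3 * n - 2) :=
    card_residuallyUnipotent_adjoinRoot_X_pow (by lia) (by simp [he])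
  have : Finite 𝔊 := Nat.finite_of_card_ne_zero <| card_𝔊 ▸ (pow_pos hq _).ne'
  let S (i : Bool) : Subgroup 𝔊 := (unipotentLetter he i).range
  let K : Subgroup 𝔊 := (lowerLeftChar (toDualNumber hn2)).ker
  have index_K : K.index = q := index_ker_lowerLeftChar he
  have card_S (i) : Nat.card (S i) = q :=
    (Nat.card_range_of_injective (unipotentLetter_injective he i)).trans
      (Nat.card_congr Multiplicative.toAdd)
  have index_S (i) : (S i).index = q * q ^ (3 * n - 4) := by
    refine Nat.mul_left_cancel hq ?_
    nth_rw 1 [← card_S i]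
    rw [Subgroup.card_mul_index, card_𝔊, ← pow_succ', ← pow_succ']
    congr 1
    lia
  have relIndex_S : (S true).relIndex K = q ^ (3 * n - 4) := by
    refine Nat.mul_right_cancel hq ?_
    rw [← index_K, Subgroup.relIndex_mul_index (range_unipotentLetter_true_le_ker he), index_S,
      index_K, mul_comm]
  have exponent_eq : ((k * q : ℕ) / (q * t : ℕ) : ℝ) = k / t := by
    push_cast
    field_simp
  have bound := fGraph_index_mul_le (S := S) (K := K) (t := t) (k := k) (B := B)
    (cycleGraph_free_cosetGraph_unipotentLetter hℓ hn he) (range_unipotentLetter_true_le_ker he)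
    (disjoint_ker_range_unipotentLetter_false he) (relIndex_S ▸ hk)
    (by rw [index_S, index_K]; nlinarith) (by rwa [index_K, card_S, exponent_eq])
  rwa [index_K] at bound

end TruncatedPolynomial

section Parameters

lemma exists_balanced_parameters {M : ℕ} {Λ : ℝ} (hΛ : 1 ≤ Λ) (hM : Λ ≤ M) :
    ∃ t k : ℕ, 0 < t ∧ t * k ≤ M ∧ M ≤ (k + 1) * t ∧ Λ * t ^ 2 ≤ M ∧ Λ - 1 ≤ (k / t : ℝ) ∧
      2 * k + 1 ≤ 9 * Λ * t := by
  have Λ_pos : 0 < Λ := one_pos.trans_le hΛ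
  let t := ⌊√(M / Λ)⌋₊
  have ht : 0 < t := Nat.floor_pos.2 <| Real.one_le_sqrt.2 <| (one_le_div Λ_pos).2 hM
  have ht' : (1 : ℝ) ≤ t := mod_cast ht
  have lower : Λ * t ^ 2 ≤ M := by
    rw [← le_div_iff₀' Λ_pos]
    exact (Real.le_sqrt (by positivity) (by positivity)).1 (Nat.floor_le (Real.sqrt_nonneg _))
  have upper : M ≤ 4 * Λ * t ^ 2 := by
    have : √(M / Λ) ≤ 2 * t := (Nat.lt_floor_add_one _).le.trans (by linarith)
    rw [Real.sqrt_le_left (by positivity), div_le_iff₀ Λ_pos] at this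
    linarith
  have mul_div_le : t * (M / t) ≤ M := Nat.mul_div_le M t
  have le_mul_div : M ≤ (M / t + 1) * t := (Nat.lt_div_mul_add ht).le.trans (by lia)
  refine ⟨t, M / t, ht, mul_div_le, le_mul_div, lower, ?_, ?_⟩
  · rw [le_div_iff₀ (by positivity)]
    have : (M : ℝ) ≤ ((M / t : ℕ) + 1) * t := mod_cast le_mul_div
    nlinarith
  · have : (t * (M / t : ℕ) : ℝ) ≤ M := mod_cast mul_div_le
    have : ((M / t : ℕ) : ℝ) ≤ 4 * Λ * t := by nlinarith
    nlinarith

lemma sq_mul_exp_neg_lt_one {x y : ℝ} (hx : 0 < x) (h : 2 * Real.log x < y) :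
    x ^ 2 * Real.exp (-y) < 1 := by
  rw [← Real.exp_log hx, ← Real.exp_nat_mul, ← Real.exp_add, Real.exp_lt_one_iff]
  push_cast
  linarith

lemma exists_parameters {q d : ℕ} (hd : 0 < d) (hq : 8 * d ≤ q) :
    ∃ t k : ℕ, 0 < t ∧ t * k ≤ q ^ (3 * d - 1) ∧ q ^ (3 * d - 1) ≤ (k + 1) * t ∧
      ((q * t : ℕ) : ℝ) ^ 2 * Real.exp (-(k / t)) < 1 ∧
      2 * k + 1 ≤ 72 * d * (Real.log q * t) ∧ Real.log q * t ^ 2 ≤ (q ^ (3 * d - 1) : ℕ) := by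
  have one_le_d : (1 : ℝ) ≤ d := mod_cast hd
  have hq' : 8 * (d : ℝ) ≤ q := mod_cast hq
  have q_pos : (0 : ℝ) < q := by linarith
  have one_le_log : 1 ≤ Real.log q := by
    rw [Real.le_log_iff_exp_le q_pos]
    linarith [Real.exp_one_lt_three]
  let Λ := 8 * d * Real.log q
  have hΛ : 8 * Real.log q ≤ Λ := by dsimp only [Λ]; nlinarith
  have Λ_le : Λ ≤ (q ^ (3 * d - 1) : ℕ) := calc
    Λ ≤ q * q := by
      dsimp only [Λ]
      gcongr
      exact Real.log_le_self q_pos.le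
    _ = (q ^ 2 : ℕ) := by push_cast; ring
    _ ≤ (q ^ (3 * d - 1) : ℕ) := mod_cast Nat.pow_le_pow_right (mod_cast q_pos) (by lia)
  obtain ⟨t, k, ht, htk, hkt, hΛt, hk, hk'⟩ := exists_balanced_parameters (by linarith) Λ_le
  have one_le_t : (1 : ℝ) ≤ t := mod_cast ht
  have t_le : (t : ℝ) ≤ q ^ (3 * d - 1) := by
    refine le_trans ?_ (hΛt.trans_eq (Nat.cast_pow _ _))
    nlinarith
  have log_le : Real.log (q * t : ℕ) ≤ 3 * d * Real.log q := calc
    Real.log (q * t : ℕ) ≤ Real.log (q * q ^ (3 * d - 1)) := by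
      push_cast
      gcongr
    _ = 3 * d * Real.log q := by
      rw [mul_pow_sub_one (by lia), Real.log_pow]
      push_cast
      ring
  refine ⟨t, k, ht, htk, hkt, ?_, hk'.trans_eq (by ring), le_trans ?_ hΛt⟩
  · refine sq_mul_exp_neg_lt_one (by push_cast; positivity) (lt_of_lt_of_le ?_ hk)
    dsimp only [Λ]
    nlinarith
  · gcongr
    linarith

lemma exists_fGraph_cycleGraph_card_mul_le {ℓ : ℕ} (hℓ : 2 ≤ ℓ) (F : Type*) [CommRing F]
    [IsDomain F] [Finite F] (hF : 8 * (ℓ / 2) ≤ Nat.card F) :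
    ∃ t : ℕ, 0 < t ∧
      fGraph (cycleGraph (2 * ℓ)) (Nat.card F * t) ≤
        72 * (ℓ / 2 : ℕ) * (Real.log (Nat.card F) * t) ∧
      Real.log (Nat.card F) * t ^ 2 ≤ (Nat.card F : ℝ) ^ ((3 * ℓ - 2 : ℝ) / 2) := by
  obtain ⟨t, k, ht, htk, hkt, hexp, hk, hlog⟩ := exists_parameters (by lia) hF
  have : NeZero t := ⟨ht.ne'⟩
  have bound := fGraph_cycleGraph_card_mul_le (F := F) (n := ℓ / 2 + 1) hℓ (by lia) htk hkt hexp
  refine ⟨t, ht, le_trans (mod_cast bound.trans (by lia)) hk, hlog.trans ?_⟩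
  have exponent_le : ((3 * (ℓ / 2) - 1 : ℕ) : ℝ) ≤ (3 * ℓ - 2) / 2 := by
    rw [le_div_iff₀ two_pos, le_sub_iff_add_le]
    norm_cast
    lia
  rw [Nat.cast_pow, ← Real.rpow_natCast]
  gcongr
  exact mod_cast Nat.card_pos

lemma mul_le_rpow_mul_rpow_of_mul_sq_le {q t a w : ℝ} (hq : 0 ≤ q) (ht : 0 < t) (ha : 0 < a)
    (hw : 0 ≤ w) (h : a * t ^ 2 ≤ q ^ ((w - 2) / 2)) :
    a * t ≤ (q * t) ^ ((w - 2) / (w + 2)) * a ^ (w / (w + 2)) := by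
  have hw2 : 0 < w + 2 := by positivity
  rw [← Real.rpow_le_rpow_iff (by positivity) (by positivity) hw2]
  calc (a * t) ^ (w + 2)
      = a ^ w * t ^ (w - 2) * (a * t ^ 2) ^ 2 := by
        have exponent_eq : w + 2 = w - 2 + (4 : ℕ) := by push_cast; ring
        rw [Real.mul_rpow ha.le ht.le, Real.rpow_add ha, exponent_eq,
          Real.rpow_add_natCast ht.ne', Real.rpow_two]
        ring
    _ ≤ a ^ w * t ^ (w - 2) * (q ^ ((w - 2) / 2)) ^ 2 := by gcongr
    _ = a ^ w * t ^ (w - 2) * q ^ (w - 2) := by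
        rw [← Real.rpow_mul_natCast hq, Nat.cast_ofNat, div_mul_cancel₀ _ two_ne_zero]
    _ = ((q * t) ^ ((w - 2) / (w + 2)) * a ^ (w / (w + 2))) ^ (w + 2) := by
        rw [Real.mul_rpow (by positivity) (by positivity), ← Real.rpow_mul (by positivity),
          ← Real.rpow_mul ha.le, div_mul_cancel₀ _ hw2.ne', div_mul_cancel₀ _ hw2.ne',
          Real.mul_rpow hq ht.le]
        ring

end Parameters

/-- For every `ℓ ≥ 2` there is `C > 0` such that for every `N` there is `r ≥ N` with
`f(r, C_{2ℓ}) ≤ C · r^{(3ℓ−2)/(3ℓ+2)} · (log r)^{3ℓ/(3ℓ+2)}`. -/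
theorem stmt4 (ℓ : ℕ) (hℓ : 2 ≤ ℓ) :
    ∃ C : ℝ, 0 < C ∧ ∀ N : ℕ, ∃ r : ℕ, N ≤ r ∧
      (fGraph (SimpleGraph.cycleGraph (2 * ℓ)) r : ℝ)
        ≤ C * (r : ℝ) ^ ((3 * (ℓ : ℝ) - 2) / (3 * (ℓ : ℝ) + 2)) *
            (Real.log r) ^ (3 * (ℓ : ℝ) / (3 * (ℓ : ℝ) + 2)) := by
  have d_pos : 0 < ℓ / 2 := by lia
  refine ⟨72 * (ℓ / 2 : ℕ), by positivity, fun N ↦ ?_⟩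
  obtain ⟨p, hNp, hp⟩ := Nat.exists_infinite_primes (max N (8 * (ℓ / 2)))
  have : Fact p.Prime := ⟨hp⟩
  obtain ⟨t, ht, hf, hlog⟩ := exists_fGraph_cycleGraph_card_mul_le hℓ (ZMod p)
    (by rw [Nat.card_zmod]; exact le_of_max_le_right hNp)
  rw [Nat.card_zmod] at hf hlog
  have log_pos : 0 < Real.log p := Real.log_pos (mod_cast hp.one_lt)
  have hpt : p ≤ p * t := Nat.le_mul_of_pos_right p ht
  refine ⟨p * t, (le_of_max_le_left hNp).trans hpt, ?_⟩
  calc (fGraph (cycleGraph (2 * ℓ)) (p * t) : ℝ)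
      ≤ 72 * (ℓ / 2 : ℕ) * (Real.log p * t) := hf
    _ ≤ 72 * (ℓ / 2 : ℕ) * ((p * t : ℝ) ^ ((3 * ℓ - 2 : ℝ) / (3 * ℓ + 2)) *
          Real.log p ^ (3 * ℓ / (3 * ℓ + 2) : ℝ)) :=
        mul_le_mul_of_nonneg_left (mul_le_rpow_mul_rpow_of_mul_sq_le (by positivity)
          (mod_cast ht) log_pos (by positivity) hlog) (by positivity)
    _ ≤ _ := by
        rw [← mul_assoc, ← Nat.cast_mul]
        gcongr
        exact mod_cast hp.pos
end

section
/- Let m ≥ 2 and t ≥ m be integers, and let 𝓗 be a family of connected m-uniform hypergraphs each having more than t vertices. For every real ε > 0 there exists r₀ such that for all integers r ≥ r₀ one has f_m(r, 𝓗) ≤ (1 + ε) · binom(r−1, m−1)/binom(t−1, m−1). -/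
/-- An `m`-uniform edge set: every edge has exactly `m` vertices. -/
def IsUniform (m : ℕ) {n : ℕ} (E : Finset (Finset (Fin n))) : Prop :=
  ∀ e ∈ E, e.card = m

/-- The hypergraph with edge set `GE` contains a subhypergraph isomorphic to the
hypergraph with edge set `HE`: there is an injection of vertices sending every edge
of `HE` to an edge of `GE`. -/
def HypContains {n N : ℕ} (HE : Finset (Finset (Fin n))) (GE : Finset (Finset (Fin N))) : Prop :=
  ∃ f : Fin n → Fin N, Function.Injective f ∧ ∀ e ∈ HE, e.image f ∈ GE

/-- The hypergraph with edge set `GE` is an `(r,k)`-hypergraph (`m`-uniform setting):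
its vertex set can be partitioned into `r` parts of size at most `k` so that for every
`m`-element set of parts there is an edge meeting each of those parts in exactly one vertex. -/
def IsRKHyper {N : ℕ} (GE : Finset (Finset (Fin N))) (m r k : ℕ) : Prop :=
  ∃ P : Fin r → Finset (Fin N),
    (∀ v : Fin N, ∃! i, v ∈ P i) ∧
    (∀ i, (P i).card ≤ k) ∧
    ∀ S : Finset (Fin r), S.card = m → ∃ e ∈ GE, ∀ i ∈ S, (e ∩ P i).card = 1

/-- A hypergraph: a number of vertices together with an edge set. -/
abbrev Hyp := (n : ℕ) × Finset (Finset (Fin n))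

/-- `f_m(r, ℋ)`: the minimum `k` for which there is an `ℋ`-free `m`-uniform
`(r,k)`-hypergraph. -/
noncomputable def fHyper (m r : ℕ) (ℋ : Set Hyp) : ℕ :=
  sInf {k | ∃ (N : ℕ) (GE : Finset (Finset (Fin N))),
    IsUniform m GE ∧ (∀ H ∈ ℋ, ¬ HypContains H.2 GE) ∧ IsRKHyper GE m r k}

/-- A hypergraph is connected: any two vertices are joined by a sequence of steps within
common edges. -/
def HypConnected (H : Hyp) : Prop :=
  ∀ u v : Fin H.1, Relation.ReflTransGen (fun x y => ∃ e ∈ H.2, x ∈ e ∧ y ∈ e) u v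

/-!
Take a family of blocks of size at most `t` on the `r` parts such that every `m`-set of parts lies
in a block. Make the blocks disjoint and let all their `m`-subsets be edges: every component then
has at most `t` vertices, so no member of `ℋ` occurs, and the size of a part is the number of
blocks through it. It remains to find such coverings in which every point has degree at most
`(1 + o(1)) * choose (r - 1) (m - 1) / choose (t - 1) (m - 1)`.

Fix a large `N`, and let the points be the pairs of an index `i < N` and a vector over `ℤ/k`. For
every `t`-set `T` of indices, consider tuples of polynomials of degree at most `m`, constrained such
that over an `m`-set `M ⊆ T` of indices their values can be prescribed subject to one linear
equation per shift `a`, and such that these values determine the tuple. The graphs of these tuples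
over `T` are blocks, each of which contains a transversal `m`-set over each `M ⊆ T`. Staggering the
equations of the `choose (N - m) (t - m)` sets `T ⊇ M`, about `k / choose (N - m) (t - m)` shifts
suffice to reach all right-hand sides, so that transversal `m`-sets are covered about once. The
non-transversal `m`-sets are a proportion `O(1 / N)` of all and become blocks themselves.
-/

open Asymptotics Filter Finset Lagrange Polynomial Topology
open scoped Nat

section Covering

variable {V W : Type*} [DecidableEq V] [DecidableEq W]

/-- A covering design of bounded degree: a family of blocks of size at most `t` that covers every
`m`-subset of `V` and in which every point lies in at most `k` blocks. -/
structure IsCovering (𝓑 : Finset (Finset V)) (m t k : ℕ) : Prop where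
  card_le : ∀ b ∈ 𝓑, #b ≤ t
  exists_superset : ∀ s : Finset V, #s = m → ∃ b ∈ 𝓑, s ⊆ b
  degree_le : ∀ v, #{b ∈ 𝓑 | v ∈ b} ≤ k

lemma IsCovering.mono {𝓑 : Finset (Finset V)} {m t k k' : ℕ} (h𝓑 : IsCovering 𝓑 m t k)
    (hk : k ≤ k') : IsCovering 𝓑 m t k' where
  card_le := h𝓑.card_le
  exists_superset := h𝓑.exists_superset
  degree_le v := (h𝓑.degree_le v).trans hk

lemma IsCovering.preimage {𝓑 : Finset (Finset V)} {m t k : ℕ} (h𝓑 : IsCovering 𝓑 m t k)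
    (g : W ↪ V) : IsCovering (𝓑.image fun b ↦ b.preimage g g.injective.injOn) m t k where
  card_le := by
    rw [forall_mem_image]
    intro b hb
    exact (card_le_card_of_injOn g (fun w hw ↦ mem_preimage.1 hw) g.injective.injOn).trans
      (h𝓑.card_le b hb)
  exists_superset s hs := by
    obtain ⟨b, hb, hsb⟩ := h𝓑.exists_superset (s.map g) (by rw [card_map, hs])
    exact ⟨_, mem_image_of_mem _ hb,
      fun w hw ↦ mem_preimage.2 (hsb (mem_map_of_mem g hw))⟩
  degree_le w := by
    rw [filter_image]
    simpa only [mem_preimage] using card_image_le.trans (h𝓑.degree_le (g w))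

end Covering

section Flags

/-- The connected component of the vertex `u` of the hypergraph `H`. -/
def hypComponent (H : Hyp) (u : Fin H.1) : Set (Fin H.1) :=
  {v | Relation.ReflTransGen (fun x y ↦ ∃ e ∈ H.2, x ∈ e ∧ y ∈ e) u v}

/-- The flags (incident block-point pairs) of a family of blocks. -/
abbrev BlockFlag {V : Type*} (𝓑 : Finset (Finset V)) : Type _ :=
  {p : Finset V × V // p.1 ∈ 𝓑 ∧ p.2 ∈ p.1}

/-- The hypergraph obtained by making the blocks of `𝓑` disjoint and taking every `m`-subset of a
block as an edge. Its vertices are the flags of `𝓑`, numbered by `e`. -/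
def flagHypergraph {V : Type*} [DecidableEq V] {𝓑 : Finset (Finset V)} {N : ℕ}
    (e : Fin N ≃ BlockFlag 𝓑) (m : ℕ) : Finset (Finset (Fin N)) :=
  {E ∈ powersetCard m univ | ∀ x ∈ E, ∀ y ∈ E, (e x).1.1 = (e y).1.1}

variable {V : Type*} [DecidableEq V] {𝓑 : Finset (Finset V)} {N m t k : ℕ}

lemma block_eq_of_mem_hypComponent (e : Fin N ≃ BlockFlag 𝓑) {H : Hyp} {f : Fin H.1 → Fin N}
    (hf : ∀ E ∈ H.2, E.image f ∈ flagHypergraph e m) {u v : Fin H.1} (hv : v ∈ hypComponent H u) :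
    (e (f u)).1.1 = (e (f v)).1.1 := by
  induction hv with
  | refl => rfl
  | tail _ hstep ih =>
    obtain ⟨E, hE, hx, hy⟩ := hstep
    exact ih.trans <| (mem_filter.1 (hf E hE)).2 _ (mem_image_of_mem f hx) _ (mem_image_of_mem f hy)

lemma not_hypContains_flagHypergraph (e : Fin N ≃ BlockFlag 𝓑) (h𝓑 : ∀ b ∈ 𝓑, #b ≤ t) {H : Hyp}
    {u : Fin H.1} (hu : t < (hypComponent H u).ncard) :
    ¬ HypContains H.2 (flagHypergraph e m) := by
  rintro ⟨f, hf, hfE⟩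
  have hblock {v} (hv : v ∈ hypComponent H u) := block_eq_of_mem_hypComponent e hfE hv
  have hcard : (hypComponent H u).ncard ≤ #(e (f u)).1.1 := by
    rw [← Set.ncard_coe_finset]
    refine Set.ncard_le_ncard_of_injOn (fun v ↦ (e (f v)).1.2) (fun v hv ↦ ?_)
      (fun v hv w hw hvw ↦ ?_)
    · rw [hblock hv]
      exact (e (f v)).2.2
    · exact hf (e.injective (Subtype.ext (Prod.ext ((hblock hv).symm.trans (hblock hw)) hvw)))
  exact (hcard.trans (h𝓑 _ (e (f u)).2.1)).not_gt hu

lemma isRKHyper_flagHypergraph {r : ℕ} {𝓑 : Finset (Finset (Fin r))} (e : Fin N ≃ BlockFlag 𝓑)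
    (h𝓑 : IsCovering 𝓑 m t k) : IsRKHyper (flagHypergraph e m) m r k := by
  refine ⟨fun i ↦ {x | (e x).1.2 = i}, fun x ↦ ⟨(e x).1.2, by simp, by simp⟩, fun i ↦ ?_,
    fun S hS ↦ ?_⟩
  · refine le_trans ?_ (h𝓑.degree_le i)
    refine card_le_card_of_injOn (fun x ↦ (e x).1.1) (fun x hx ↦ ?_) (fun x hx y hy hxy ↦ ?_)
    · obtain rfl : (e x).1.2 = i := by simpa using hx
      simpa using (e x).2
    · simp only [coe_filter, mem_univ, true_and, Set.mem_ofPred_eq] at hx hy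
      exact e.injective (Subtype.ext (Prod.ext hxy (hx.trans hy.symm)))
  · obtain ⟨b, hb, hSb⟩ := h𝓑.exists_superset S hS
    let flag (i : S) : Fin N := e.symm ⟨(b, i), hb, hSb i.2⟩
    have hflag (i : S) : (e (flag i)).1 = (b, i.1) := by simp [flag]
    have hflag_inj : Function.Injective flag := fun i j hij ↦
      Subtype.ext (congrArg (fun p : BlockFlag 𝓑 ↦ p.1.2) (e.symm.injective hij))
    refine ⟨univ.image flag, ?_, fun i hi ↦ card_eq_one.2 ⟨flag ⟨i, hi⟩, ?_⟩⟩
    · rw [flagHypergraph, mem_filter, mem_powersetCard_univ, card_image_of_injective _ hflag_inj,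
        card_univ, Fintype.card_coe, hS]
      simp only [forall_mem_image, hflag, implies_true, and_self]
    · ext x
      simp only [mem_inter, mem_image, mem_univ, true_and, mem_filter, mem_singleton]
      constructor
      · rintro ⟨⟨j, rfl⟩, hj⟩
        exact congrArg flag (Subtype.ext (by simpa [hflag] using hj))
      · rintro rfl
        exact ⟨⟨_, rfl⟩, by rw [hflag]⟩

lemma fHyper_le_of_isCovering {r : ℕ} {𝓑 : Finset (Finset (Fin r))} (h𝓑 : IsCovering 𝓑 m t k)
    {ℋ : Set Hyp} (hℋ : ∀ H ∈ ℋ, ∃ u, t < (hypComponent H u).ncard) : fHyper m r ℋ ≤ k := by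
  let e := (Fintype.equivFin (BlockFlag 𝓑)).symm
  refine Nat.sInf_le ⟨_, flagHypergraph e m, fun E hE ↦ ?_, fun H hH ↦ ?_,
    isRKHyper_flagHypergraph e h𝓑⟩
  · exact (mem_powersetCard.1 (mem_filter.1 hE).1).2
  · obtain ⟨u, hu⟩ := hℋ H hH
    exact not_hypContains_flagHypergraph e h𝓑.card_le hu

end Flags

section Interpolation

variable {ι R : Type*} [CommRing R] {θ : ι → R}

lemma coeff_nodal_card (M : Finset ι) (θ : ι → R) : (nodal M θ).coeff #M = 1 := by
  nontriviality R
  simpa only [natDegree_nodal] using (nodal_monic (s := M) (v := θ)).coeff_natDegree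

lemma natDegree_nodal_le (M : Finset ι) (θ : ι → R) : (nodal M θ).natDegree ≤ #M := by
  nontriviality R
  exact natDegree_nodal.le

lemma exists_degree_lt_forall_eval_eq
    (hθ : Pairwise fun i j ↦ IsUnit (θ i - θ j)) (y : ι → R) (M : Finset ι) :
    ∃ p : R[X], p.degree < #M ∧ ∀ i ∈ M, p.eval (θ i) = y i := by
  classical
  nontriviality R
  induction M using Finset.induction_on with
  | empty => exact ⟨0, by simp, by simp⟩
  | insert i M hi ih =>
    obtain ⟨p, hp, hpe⟩ := ih
    obtain ⟨w, hw⟩ : IsUnit ((nodal M θ).eval (θ i)) := by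
      rw [eval_nodal, IsUnit.prod_iff]
      exact fun j hj ↦ hθ (ne_of_mem_of_not_mem hj hi).symm
    have hlt : (#M : WithBot ℕ) < #(insert i M) := by
      exact_mod_cast card_lt_card (ssubset_insert hi)
    refine ⟨p + ((y i - p.eval (θ i)) * ↑w⁻¹) • nodal M θ, ?_, ?_⟩
    · refine (degree_add_le _ _).trans_lt (max_lt (hp.trans hlt) ?_)
      exact ((degree_smul_le _ _).trans degree_nodal.le).trans_lt hlt
    · rw [forall_mem_insert]
      refine ⟨?_, fun j hj ↦ ?_⟩
      · rw [eval_add, eval_smul, ← hw, smul_eq_mul, Units.inv_mul_cancel_right, add_sub_cancel]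
      · rw [eval_add, eval_smul, eval_nodal_at_node hj, smul_zero, add_zero, hpe j hj]

lemma nodal_dvd_of_forall_eval_eq_zero (hθ : Pairwise fun i j ↦ IsUnit (θ i - θ j))
    {M : Finset ι} {p : R[X]} (h : ∀ i ∈ M, p.eval (θ i) = 0) : nodal M θ ∣ p :=
  prod_dvd_of_coprime (fun _ _ _ _ hij ↦ isCoprime_X_sub_C_of_isUnit_sub (hθ hij))
    fun i hi ↦ dvd_iff_isRoot.2 (h i hi)

lemma eq_coeff_smul_nodal (hθ : Pairwise fun i j ↦ IsUnit (θ i - θ j)) {M : Finset ι} {p : R[X]}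
    (hp : p.natDegree ≤ #M) (h : ∀ i ∈ M, p.eval (θ i) = 0) : p = p.coeff #M • nodal M θ := by
  nontriviality R
  obtain ⟨q, rfl⟩ := nodal_dvd_of_forall_eval_eq_zero hθ h
  obtain ⟨a, rfl⟩ : ∃ a, q = C a := by
    rcases eq_or_ne q 0 with rfl | hq
    · exact ⟨0, C_0.symm⟩
    · rw [nodal_monic.natDegree_mul' hq, natDegree_nodal] at hp
      exact ⟨q.coeff 0, eq_C_of_natDegree_eq_zero (by omega)⟩
  rw [coeff_mul_C, coeff_nodal_card, one_mul, smul_eq_C_mul, mul_comm]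

end Interpolation

section Code

variable {ι R : Type*} [CommRing R]

/-- The weighted sum of the values of a polynomial at the nodes indexed by `S`. -/
noncomputable def codeLabel (θ u : ι → R) (S : Finset ι) : R[X] →ₗ[R] R :=
  ∑ i ∈ S, u i • leval (θ i)

lemma codeLabel_apply (θ u : ι → R) (S : Finset ι) (p : R[X]) :
    codeLabel θ u S p = ∑ i ∈ S, u i * p.eval (θ i) := by
  simp [codeLabel]

/-- Nodes `θ` and weights `u` in general position: every quantity that has to be inverted in order
to determine a codeword from its values at `m` nodes is a unit. -/
structure IsGeneric (θ u : ι → R) (m : ℕ) : Prop where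
  isUnit_weight : ∀ i, IsUnit (u i)
  isUnit_sub : Pairwise fun i j ↦ IsUnit (θ i - θ j)
  isUnit_codeLabel_nodal : ∀ M S : Finset ι, #M = m → #S = m → M ≠ S →
    IsUnit (codeLabel θ u S (nodal M θ))

/-- Codewords over the index set `T` with prescribed labels `ℓ`: one polynomial `p S` for every set
`S` of indices. The sum condition removes the last degree of freedom, so that a codeword is
determined by its values at any `m` nodes of `T`, and these values can be prescribed subject to a
single linear equation. -/
structure IsCodeword (θ u : ι → R) (m : ℕ) (T : Finset ι) (ℓ : Finset ι → R)
    (p : Finset ι → R[X]) : Prop where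
  natDegree_le : ∀ S, (p S).natDegree ≤ m
  coeff_eq_zero : ∀ S, S ∉ T.powersetCard m → (p S).coeff m = 0
  sum_coeff : ∑ S ∈ T.powersetCard m, (p S).coeff m = 0
  codeLabel_eq : ∀ S ∈ T.powersetCard m, codeLabel θ u S (p S) = ℓ S

namespace IsCodeword

variable {θ u : ι → R} {m : ℕ} {T M : Finset ι} {ℓ ℓ' : Finset ι → R} {p p' : Finset ι → R[X]}

lemma sub (hp : IsCodeword θ u m T ℓ p) (hp' : IsCodeword θ u m T ℓ' p') :
    IsCodeword θ u m T (ℓ - ℓ') (p - p') where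
  natDegree_le S := (natDegree_sub_le _ _).trans (max_le (hp.natDegree_le S) (hp'.natDegree_le S))
  coeff_eq_zero S hS := by
    rw [Pi.sub_apply, coeff_sub, hp.coeff_eq_zero S hS, hp'.coeff_eq_zero S hS, sub_zero]
  sum_coeff := by
    simp only [Pi.sub_apply, coeff_sub, sum_sub_distrib, hp.sum_coeff, hp'.sum_coeff, sub_zero]
  codeLabel_eq S hS := by
    rw [Pi.sub_apply, map_sub, hp.codeLabel_eq S hS, hp'.codeLabel_eq S hS, Pi.sub_apply]

lemma eq_zero_of_eval_eq_zero (hθu : IsGeneric θ u m) (hp : IsCodeword θ u m T 0 p)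
    (hM : M ∈ T.powersetCard m) (h : ∀ i ∈ M, ∀ S, (p S).eval (θ i) = 0) : p = 0 := by
  have hMc : #M = m := (mem_powersetCard.1 hM).2
  have hsmul (S) : p S = (p S).coeff m • nodal M θ := by
    subst hMc
    exact eq_coeff_smul_nodal hθu.isUnit_sub (hp.natDegree_le S) fun i hi ↦ h i hi S
  have hcoeff_of_ne (S) (hS : S ≠ M) : (p S).coeff m = 0 := by
    by_cases hST : S ∈ T.powersetCard m
    · have hlabel := hp.codeLabel_eq S hST
      rw [hsmul S, map_smul, smul_eq_mul, Pi.zero_apply] at hlabel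
      exact (hθu.isUnit_codeLabel_nodal M S hMc (mem_powersetCard.1 hST).2
        hS.symm).mul_left_eq_zero.1 hlabel
    · exact hp.coeff_eq_zero S hST
  have hcoeff_self : (p M).coeff m = 0 := by
    rw [← hp.sum_coeff, sum_eq_single_of_mem M hM fun S _ hS ↦ hcoeff_of_ne S hS]
  funext S
  have hcoeff : (p S).coeff m = 0 := by
    rcases eq_or_ne S M with rfl | hS
    exacts [hcoeff_self, hcoeff_of_ne S hS]
  rw [hsmul S, hcoeff, zero_smul, Pi.zero_apply]

/-- The value at `(j, M)` is recovered from the others by solving the label equation of `M`. -/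
lemma ext_of_eval_eq (hθu : IsGeneric θ u m) (hp : IsCodeword θ u m T ℓ p)
    (hp' : IsCodeword θ u m T ℓ p') (hM : M ∈ T.powersetCard m) {j : ι} (hj : j ∈ M)
    (h : ∀ i ∈ M, ∀ S, (i, S) ≠ (j, M) → (p S).eval (θ i) = (p' S).eval (θ i)) : p = p' := by
  have hsub := hp.sub hp'
  rw [sub_self] at hsub
  have hzero (i) (hi : i ∈ M) (S) (hne : (i, S) ≠ (j, M)) : ((p - p') S).eval (θ i) = 0 := by
    rw [Pi.sub_apply, eval_sub, h i hi S hne, sub_self]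
  have hlast : ((p - p') M).eval (θ j) = 0 := by
    have hlabel := hsub.codeLabel_eq M hM
    rw [codeLabel_apply, Pi.zero_apply, sum_eq_single_of_mem j hj fun i hi hij ↦ by
      rw [hzero i hi M (by simp [hij]), mul_zero]] at hlabel
    exact (hθu.isUnit_weight j).mul_right_eq_zero.1 hlabel
  refine sub_eq_zero.1 (eq_zero_of_eval_eq_zero hθu hsub hM fun i hi S ↦ ?_)
  by_cases hne : (i, S) = (j, M)
  · obtain ⟨rfl, rfl⟩ := Prod.mk.inj hne
    exact hlast
  · exact hzero i hi S hne

end IsCodeword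

lemma IsGeneric.exists_codeLabel_add_smul_nodal {θ u : ι → R} {m : ℕ} (hθu : IsGeneric θ u m)
    {M S : Finset ι} (hM : #M = m) (hS : #S = m) (hne : M ≠ S) (q : R[X]) (x : R) :
    ∃ β : R, codeLabel θ u S (q + β • nodal M θ) = x := by
  obtain ⟨w, hw⟩ := hθu.isUnit_codeLabel_nodal M S hM hS hne
  refine ⟨(x - codeLabel θ u S q) * ↑w⁻¹, ?_⟩
  rw [map_add, map_smul, smul_eq_mul, ← hw, Units.inv_mul_cancel_right, add_sub_cancel]

lemma IsGeneric.exists_isCodeword {θ u : ι → R} {m : ℕ} (hθu : IsGeneric θ u m)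
    {T M : Finset ι} (hM : M ∈ T.powersetCard m) (y : ι → Finset ι → R) {ℓ : Finset ι → R}
    (hℓ : ∑ i ∈ M, u i * y i M = ℓ M) :
    ∃ p, IsCodeword θ u m T ℓ p ∧ ∀ i ∈ M, ∀ S, (p S).eval (θ i) = y i S := by
  classical
  have hMc : #M = m := (mem_powersetCard.1 hM).2
  choose q hq hqe using fun S ↦ exists_degree_lt_forall_eval_eq hθu.isUnit_sub (fun i ↦ y i S) M
  rw [hMc] at hq
  choose! β hβ using fun (S : Finset ι) (hS : #S = m) (hne : M ≠ S) ↦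
    hθu.exists_codeLabel_add_smul_nodal hMc hS hne (q S) (ℓ S)
  let α (S : Finset ι) : R :=
    if S = M then -∑ S ∈ (T.powersetCard m).erase M, β S
    else if S ∈ T.powersetCard m then β S else 0
  have hcoeff (S) : (q S + α S • nodal M θ).coeff m = α S := by
    rw [coeff_add, coeff_smul, coeff_eq_zero_of_degree_lt (hq S), ← hMc, coeff_nodal_card, zero_add,
      smul_eq_mul, mul_one]
  have heval (i) (hi : i ∈ M) (S) : (q S + α S • nodal M θ).eval (θ i) = y i S := by
    rw [eval_add, eval_smul, eval_nodal_at_node hi, smul_zero, add_zero, hqe S i hi]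
  refine ⟨fun S ↦ q S + α S • nodal M θ, ⟨fun S ↦ ?_, fun S hS ↦ ?_, ?_, fun S hS ↦ ?_⟩, heval⟩
  · refine natDegree_add_le_of_degree_le (natDegree_le_of_degree_le (hq S).le) ?_
    exact (natDegree_smul_le _ _).trans ((natDegree_nodal_le M θ).trans hMc.le)
  · rw [hcoeff]
    simp only [α, if_neg (ne_of_mem_of_not_mem hM hS).symm, if_neg hS]
  · have hα : ∀ S ∈ (T.powersetCard m).erase M, α S = β S := fun S hS ↦ by
      simp only [α, if_neg (ne_of_mem_erase hS), if_pos (mem_of_mem_erase hS)]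
    simp only [hcoeff]
    rw [← add_sum_erase _ _ hM, sum_congr rfl hα]
    simp only [α, if_true, neg_add_cancel]
  · rcases eq_or_ne S M with rfl | hSM
    · rw [codeLabel_apply, ← hℓ]
      exact sum_congr rfl fun i hi ↦ by rw [heval i hi]
    · simpa only [α, if_neg hSM, if_pos hS] using hβ S (mem_powersetCard.1 hS).2 hSM.symm

end Code

section NonTransversal

variable {ι W : Type*} [Fintype ι] [DecidableEq ι] [Fintype W]

/-- The `m`-subsets of `ι × W` that meet some fibre of the first projection more than once. -/
def nonTransversal (ι W : Type*) [Fintype ι] [DecidableEq ι] [Fintype W] (m : ℕ) :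
    Finset (Finset (ι × W)) :=
  {b ∈ powersetCard m univ | ¬ Set.InjOn Prod.fst (b : Set (ι × W))}

lemma mem_nonTransversal {m : ℕ} {b : Finset (ι × W)} :
    b ∈ nonTransversal ι W m ↔ #b = m ∧ ¬ Set.InjOn Prod.fst (b : Set (ι × W)) := by
  rw [nonTransversal, mem_filter, mem_powersetCard_univ]

lemma exists_ne_fst_eq_of_mem_nonTransversal {m : ℕ} {b : Finset (ι × W)}
    (hb : b ∈ nonTransversal ι W m) (v : ι × W) :
    ∃ x ∈ b, x ≠ v ∧ ∃ y ∈ b, y ≠ x ∧ y.1 = x.1 := by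
  obtain ⟨x, hx, y, hy, hxy, hne⟩ : ∃ x ∈ b, ∃ y ∈ b, x.1 = y.1 ∧ x ≠ y := by
    simpa [Set.InjOn] using (mem_nonTransversal.1 hb).2
  by_cases hxv : x = v
  · exact ⟨y, hy, fun hyv ↦ hne (hxv.trans hyv.symm), x, hx, hne, hxy⟩
  · exact ⟨x, hx, hxv, y, hy, hne.symm, hxy.symm⟩

lemma degree_nonTransversal_le [DecidableEq W] {m : ℕ} (hm : 2 ≤ m) (v : ι × W) :
    #{b ∈ nonTransversal ι W m | v ∈ b} ≤
      (Fintype.card ι * Fintype.card W) ^ (m - 2) * ((m - 1) * Fintype.card W) := by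
  let extensions (s : Finset (ι × W)) : Finset (Finset (ι × W)) :=
    ((insert v s).image Prod.fst ×ˢ univ).image fun x ↦ insert x (insert v s)
  have hsub : {b ∈ nonTransversal ι W m | v ∈ b} ⊆
      (powersetCard (m - 2) univ).biUnion extensions := by
    intro b hb
    obtain ⟨hb, hvb⟩ := mem_filter.1 hb
    obtain ⟨x, hx, hxv, y, hy, hyx, hfst⟩ := exists_ne_fst_eq_of_mem_nonTransversal hb v
    have hvx : v ∈ b.erase x := mem_erase.2 ⟨hxv.symm, hvb⟩
    refine mem_biUnion.2 ⟨(b.erase x).erase v, ?_, mem_image.2 ⟨x, ?_, ?_⟩⟩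
    · rw [mem_powersetCard_univ, card_erase_of_mem hvx, card_erase_of_mem hx,
        (mem_nonTransversal.1 hb).1, Nat.sub_sub]
    · rw [insert_erase hvx]
      exact mem_product.2 ⟨mem_image.2 ⟨y, mem_erase.2 ⟨hyx, hy⟩, hfst⟩, mem_univ _⟩
    · rw [insert_erase hvx, insert_erase hx]
  have hcard : ∀ s ∈ powersetCard (m - 2) univ, #(extensions s) ≤ (m - 1) * Fintype.card W := by
    intro s hs
    rw [mem_powersetCard_univ] at hs
    calc #(extensions s) ≤ #((insert v s).image Prod.fst) * Fintype.card W :=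
          card_image_le.trans (card_product _ _).le
      _ ≤ (#s + 1) * Fintype.card W := by gcongr; exact card_image_le.trans (card_insert_le _ _)
      _ = (m - 1) * Fintype.card W := by rw [hs, show m - 2 + 1 = m - 1 by omega]
  calc _ ≤ #((powersetCard (m - 2) univ).biUnion extensions) := card_le_card hsub
    _ ≤ #(powersetCard (m - 2) (univ : Finset (ι × W))) * ((m - 1) * Fintype.card W) :=
        card_biUnion_le_card_mul _ _ _ hcard
    _ ≤ _ := by
        rw [card_powersetCard, card_univ, Fintype.card_prod]
        gcongr
        exact Nat.choose_le_pow _ _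

end NonTransversal

section CodeCovering

variable {ι R : Type*} [Fintype ι] [DecidableEq ι] [CommRing R] [DecidableEq R]

/-- The block of a codeword over `T`: the graph of `i ↦ (p S (θ i))_S` over `T`. -/
def codeBlock (θ : ι → R) (T : Finset ι) (p : Finset ι → R[X]) : Finset (ι × (Finset ι → R)) :=
  T.image fun i ↦ (i, fun S ↦ (p S).eval (θ i))

lemma mem_codeBlock {θ : ι → R} {T : Finset ι} {p : Finset ι → R[X]} {v : ι × (Finset ι → R)} :
    v ∈ codeBlock θ T p ↔ v.1 ∈ T ∧ ∀ S, (p S).eval (θ v.1) = v.2 S := by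
  simp [codeBlock, Prod.ext_iff, funext_iff]

variable [Fintype R]

open scoped Classical in
/-- The blocks of the codewords over `T` whose labels are `S ↦ a + c S` for some `a ∈ A`. -/
noncomputable def codeBlocks (θ u : ι → R) (m : ℕ) (A : Finset R) (c : Finset ι → R)
    (T : Finset ι) : Finset (Finset (ι × (Finset ι → R))) :=
  {b | ∃ a ∈ A, ∃ p, IsCodeword θ u m T (fun S ↦ a + c S) p ∧ b = codeBlock θ T p}

variable {θ u : ι → R} {m t : ℕ} {A : Finset R}

lemma mem_codeBlocks {c : Finset ι → R} {T : Finset ι} {b : Finset (ι × (Finset ι → R))} :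
    b ∈ codeBlocks θ u m A c T ↔
      ∃ a ∈ A, ∃ p, IsCodeword θ u m T (fun S ↦ a + c S) p ∧ b = codeBlock θ T p := by
  simp only [codeBlocks, mem_filter_univ]

lemma fst_mem_of_mem_codeBlocks {c : Finset ι → R} {T : Finset ι}
    {b : Finset (ι × (Finset ι → R))} {v : ι × (Finset ι → R)} (hb : b ∈ codeBlocks θ u m A c T)
    (hv : v ∈ b) : v.1 ∈ T := by
  obtain ⟨a, -, p, -, rfl⟩ := mem_codeBlocks.1 hb
  exact (mem_codeBlock.1 hv).1

/-- Fix `v.1 ∈ M ⊆ T` with `#M = m` and `j ∈ M` other than `v.1`. A codeword through `v` is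
determined by the shift `a` and its values at the `(i, S) ≠ (j, M)` with `i ∈ M`, `i ≠ v.1`. -/
lemma degree_codeBlocks_le (hθu : IsGeneric θ u m) (hm : 2 ≤ m) (A : Finset R)
    (c : Finset ι → R) {T : Finset ι} (hT : m ≤ #T) {v : ι × (Finset ι → R)} (hv : v.1 ∈ T) :
    #{b ∈ codeBlocks θ u m A c T | v ∈ b} ≤
      #A * Fintype.card R ^ ((m - 1) * 2 ^ Fintype.card ι - 1) := by
  obtain ⟨M, hvM, hMT, hMc⟩ : ∃ M, {v.1} ⊆ M ∧ M ⊆ T ∧ #M = m :=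
    exists_subsuperset_card_eq (singleton_subset_iff.2 hv) (by rw [card_singleton]; omega) hT
  rw [singleton_subset_iff] at hvM
  obtain ⟨j, hj⟩ : (M.erase v.1).Nonempty := by
    rw [← card_pos, card_erase_of_mem hvM]; omega
  let Z : Finset (ι × Finset ι) := (M.erase v.1 ×ˢ univ).erase (j, M)
  have hZ : #Z = (m - 1) * 2 ^ Fintype.card ι - 1 := by
    rw [card_erase_of_mem (mem_product.2 ⟨hj, mem_univ _⟩), card_product, card_erase_of_mem hvM,
      hMc, card_univ, Fintype.card_finset]
  have hcode : ∀ b ∈ ({b ∈ codeBlocks θ u m A c T | v ∈ b} : Finset _), ∃ a ∈ A, ∃ p,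
      IsCodeword θ u m T (fun S ↦ a + c S) p ∧ b = codeBlock θ T p := fun b hb ↦
    mem_codeBlocks.1 (mem_filter.1 hb).1
  choose! a ha p hp hbp using hcode
  have heval_v {b} (hb : b ∈ ({b ∈ codeBlocks θ u m A c T | v ∈ b} : Finset _)) (S) :
      (p b S).eval (θ v.1) = v.2 S :=
    (mem_codeBlock.1 (hbp b hb ▸ (mem_filter.1 hb).2)).2 S
  calc _ ≤ #(A ×ˢ (univ : Finset (Z → R))) := by
        refine card_le_card_of_injOn (fun b ↦ (a b, fun z ↦ (p b z.1.2).eval (θ z.1.1)))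
          (fun b hb ↦ by simpa using ha b hb) fun b hb b' hb' h ↦ ?_
        obtain ⟨haa, hpp⟩ := Prod.mk.inj h
        rw [mem_coe] at hb hb'
        rw [hbp b hb, hbp b' hb']
        refine congrArg _ ((hp b hb).ext_of_eval_eq hθu (haa ▸ hp b' hb')
          (mem_powersetCard.2 ⟨hMT, hMc⟩) (mem_of_mem_erase hj) fun i hi S hne ↦ ?_)
        rcases eq_or_ne i v.1 with rfl | hiv
        · rw [heval_v hb, heval_v hb']
        · exact congrFun hpp
            ⟨(i, S), mem_erase.2 ⟨hne, mem_product.2 ⟨mem_erase.2 ⟨hiv, hi⟩, mem_univ _⟩⟩⟩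
    _ = _ := by rw [card_product, card_univ, Fintype.card_fun, Fintype.card_coe, hZ]

/-- All blocks of codewords over the `t`-sets `T`, where the labels over `T` are shifted by `c T`,
together with the non-transversal `m`-sets as blocks of their own. -/
noncomputable def codeCovering (θ u : ι → R) (m t : ℕ) (A : Finset R)
    (c : Finset ι → Finset ι → R) : Finset (Finset (ι × (Finset ι → R))) :=
  (powersetCard t univ).biUnion (fun T ↦ codeBlocks θ u m A (c T) T) ∪ nonTransversal ι _ m

lemma card_le_of_mem_codeCovering (ht : m ≤ t) {c : Finset ι → Finset ι → R}
    {b : Finset (ι × (Finset ι → R))} (hb : b ∈ codeCovering θ u m t A c) : #b ≤ t := by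
  rcases mem_union.1 hb with hb | hb
  · obtain ⟨T, hT, hb⟩ := mem_biUnion.1 hb
    obtain ⟨a, -, p, -, rfl⟩ := mem_codeBlocks.1 hb
    exact card_image_le.trans (mem_powersetCard_univ.1 hT).le
  · exact (mem_nonTransversal.1 hb).1.trans_le ht

lemma exists_superset_mem_codeCovering (hθu : IsGeneric θ u m) {c : Finset ι → Finset ι → R}
    (hA : ∀ M : Finset ι, #M = m → ∀ x, ∃ T, M ⊆ T ∧ #T = t ∧ x - c T M ∈ A)
    {s : Finset (ι × (Finset ι → R))} (hs : #s = m) : ∃ b ∈ codeCovering θ u m t A c, s ⊆ b := by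
  by_cases hinj : Set.InjOn Prod.fst (s : Set (ι × (Finset ι → R)))
  · obtain ⟨y, hy⟩ : ∃ y : ι → Finset ι → R, ∀ v ∈ s, y v.1 = v.2 := by
      classical
      refine ⟨fun i ↦ if h : ∃ w, (i, w) ∈ s then h.choose else 0, fun v hv ↦ ?_⟩
      have h : ∃ w, (v.1, w) ∈ s := ⟨v.2, hv⟩
      simp only [dif_pos h]
      exact congrArg Prod.snd (hinj h.choose_spec hv rfl)
    let M := s.image Prod.fst
    have hMc : #M = m := (card_image_of_injOn hinj).trans hs
    obtain ⟨T, hMT, hTc, hTA⟩ := hA M hMc (∑ i ∈ M, u i * y i M)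
    obtain ⟨p, hp, hpe⟩ := hθu.exists_isCodeword (mem_powersetCard.2 ⟨hMT, hMc⟩) y
      (ℓ := fun S ↦ (∑ i ∈ M, u i * y i M - c T M) + c T S) (sub_add_cancel _ _).symm
    refine ⟨codeBlock θ T p, mem_union_left _ (mem_biUnion.2 ⟨T, mem_powersetCard_univ.2 hTc,
      mem_codeBlocks.2 ⟨_, hTA, p, hp, rfl⟩⟩), fun v hv ↦ ?_⟩
    have hvM : v.1 ∈ M := mem_image_of_mem _ hv
    exact mem_codeBlock.2 ⟨hMT hvM, fun S ↦ by rw [hpe _ hvM, hy v hv]⟩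
  · exact ⟨s, mem_union_right _ (mem_nonTransversal.2 ⟨hs, hinj⟩), subset_rfl⟩

/-- The bound on the degree of a `codeCovering` with `N` indices and `a` shifts over a ring with `q`
elements; the second summand accounts for the non-transversal `m`-sets. -/
def codeDegree (m t N q a : ℕ) : ℕ :=
  (N - 1).choose (t - 1) * (a * q ^ ((m - 1) * 2 ^ N - 1)) +
    (N * q ^ 2 ^ N) ^ (m - 2) * ((m - 1) * q ^ 2 ^ N)

lemma degree_codeCovering_le (hθu : IsGeneric θ u m) (hm : 2 ≤ m) (ht : m ≤ t) (A : Finset R)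
    (c : Finset ι → Finset ι → R) (v : ι × (Finset ι → R)) :
    #{b ∈ codeCovering θ u m t A c | v ∈ b} ≤
      codeDegree m t (Fintype.card ι) (Fintype.card R) #A := by
  have hcode : {b ∈ (powersetCard t univ).biUnion fun T ↦ codeBlocks θ u m A (c T) T | v ∈ b} ⊆
      ({T ∈ powersetCard t univ | {v.1} ⊆ T} : Finset _).biUnion
        fun T ↦ {b ∈ codeBlocks θ u m A (c T) T | v ∈ b} := fun b hb ↦ by
    obtain ⟨hb, hvb⟩ := mem_filter.1 hb
    obtain ⟨T, hT, hb⟩ := mem_biUnion.1 hb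
    exact mem_biUnion.2 ⟨T, mem_filter.2 ⟨hT, singleton_subset_iff.2
      (fst_mem_of_mem_codeBlocks hb hvb)⟩, mem_filter.2 ⟨hb, hvb⟩⟩
  rw [codeCovering, filter_union]
  refine (card_union_le _ _).trans (add_le_add ?_ ?_)
  · refine ((card_le_card hcode).trans
      (card_biUnion_le_card_mul _ _ _ fun T hT ↦ ?_)).trans_eq (congrArg (· * _) ?_)
    · exact (mem_filter.1 hT).elim fun hT hvT ↦ degree_codeBlocks_le hθu hm A (c T)
        (ht.trans (mem_powersetCard_univ.1 hT).ge) (singleton_subset_iff.1 hvT)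
    · rw [card_filter_powersetCard_subset _ _ _ (subset_univ _) (by rw [card_singleton]; omega),
        card_singleton, card_univ]
  · simpa only [Fintype.card_fun, Fintype.card_finset] using degree_nonTransversal_le hm v

lemma isCovering_codeCovering (hθu : IsGeneric θ u m) (hm : 2 ≤ m) (ht : m ≤ t)
    {c : Finset ι → Finset ι → R}
    (hA : ∀ M : Finset ι, #M = m → ∀ x, ∃ T, M ⊆ T ∧ #T = t ∧ x - c T M ∈ A) :
    IsCovering (codeCovering θ u m t A c) m t
      (codeDegree m t (Fintype.card ι) (Fintype.card R) #A) where
  card_le _ hb := card_le_of_mem_codeCovering ht hb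
  exists_superset _ hs := exists_superset_mem_codeCovering hθu hA hs
  degree_le := degree_codeCovering_le hθu hm ht A c

end CodeCovering

section Constants

lemma exists_shift_forall_exists_sub_mem (k L : ℕ) [NeZero k] {α : Type*} (F : Finset α)
    (h : k ≤ L * #F) :
    ∃ c : α → ZMod k, ∀ x, ∃ T ∈ F, x - c T ∈ (range L).image (Nat.cast : ℕ → ZMod k) := by
  classical
  have hL : 0 < L := Nat.pos_of_mul_pos_right ((Nat.pos_of_neZero k).trans_le h)
  refine ⟨fun T ↦ if hT : T ∈ F then (L * F.equivFin ⟨T, hT⟩ : ℕ) else 0, fun x ↦ ?_⟩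
  have hdiv : x.val / L < #F := Nat.div_lt_of_lt_mul (x.val_lt.trans_le h)
  let T := F.equivFin.symm ⟨x.val / L, hdiv⟩
  refine ⟨T, T.2, mem_image.2 ⟨x.val % L, mem_range.2 (Nat.mod_lt _ hL), ?_⟩⟩
  have hx : ((x.val % L + L * (x.val / L) : ℕ) : ZMod k) = x := by
    rw [Nat.mod_add_div, ZMod.natCast_zmod_val]
  simp only [T.2, dif_pos, T, Equiv.apply_symm_apply, Subtype.coe_eta]
  rw [eq_sub_iff_add_eq, ← Nat.cast_add, hx]

lemma eventually_isUnit_intCast_zmod {x : ℤ} (hx : x ≠ 0) :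
    ∀ᶠ n in atTop, ∀ j, IsUnit (x : ZMod (1 + n ! * j)) := by
  filter_upwards [eventually_ge_atTop x.natAbs] with n hn j
  obtain ⟨y, hy⟩ : x ∣ (n ! : ℤ) :=
    Int.natAbs_dvd.1 (Int.natCast_dvd_natCast.2 (Nat.dvd_factorial (Int.natAbs_pos.2 hx) hn))
  rw [ZMod.coe_int_isUnit_iff_isCoprime]
  refine ⟨1, -(y * j), ?_⟩
  push_cast
  rw [hy]
  ring

/-- The weights are `u i = B ^ i`: then each quantity is a nonzero polynomial in `B`. -/
lemma exists_weights_codeLabel_nodal_ne_zero {R : Type*} [CommRing R] [IsDomain R] [Infinite R]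
    {N : ℕ} {θ : Fin N → R} (hθ : Function.Injective θ) :
    ∃ u : Fin N → R, (∀ i, u i ≠ 0) ∧
      ∀ M S : Finset (Fin N), ¬ S ⊆ M → codeLabel θ u S (nodal M θ) ≠ 0 := by
  let Q (M S : Finset (Fin N)) : R[X] := ∑ i ∈ S, C ((nodal M θ).eval (θ i)) * X ^ (i : ℕ)
  have hQ (M S : Finset (Fin N)) (hMS : ¬ S ⊆ M) : Q M S ≠ 0 := by
    obtain ⟨i, hiS, hiM⟩ := not_subset.1 hMS
    have hcoeff : (Q M S).coeff i = (nodal M θ).eval (θ i) := by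
      simp only [Q, finsetSum_coeff, coeff_C_mul_X_pow, Fin.val_inj]
      rw [sum_ite_eq, if_pos hiS]
    intro h
    rw [h, coeff_zero, eq_comm, eval_nodal, prod_eq_zero_iff] at hcoeff
    obtain ⟨j, hj, hij⟩ := hcoeff
    exact ne_of_mem_of_not_mem hj hiM (hθ (sub_eq_zero.1 hij)).symm
  obtain ⟨B, hB, hBQ⟩ : ∃ B : R, B ≠ 0 ∧ ∀ M S, ¬ S ⊆ M → ¬ (Q M S).IsRoot B := by
    have hroot : ∀ᶠ B in cofinite, ∀ M S, ¬ S ⊆ M → ¬ (Q M S).IsRoot B :=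
      eventually_all.2 fun M ↦ eventually_all.2 fun S ↦ eventually_imp_distrib_left.2 fun h ↦
        eventually_cofinite_not_isRoot (hQ M S h)
    exact ((eventually_cofinite_ne 0).and hroot).exists
  refine ⟨fun i ↦ B ^ (i : ℕ), fun i ↦ pow_ne_zero _ hB, fun M S hMS ↦ ?_⟩
  have heval : codeLabel θ (fun i ↦ B ^ (i : ℕ)) S (nodal M θ) = (Q M S).eval B := by
    simp only [codeLabel_apply, Q, eval_finsetSum, eval_mul, eval_C, eval_pow, eval_X, mul_comm]
  exact heval ▸ hBQ M S hMS

lemma exists_isGeneric_zmod (m N : ℕ) :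
    ∃ Δ > 0, ∃ u : Fin N → ℤ, ∀ j, IsGeneric (R := ZMod (1 + Δ * j))
      (fun i : Fin N ↦ ((i : ℕ) : ZMod _)) (fun i ↦ (u i : ZMod _)) m := by
  let θ (i : Fin N) : ℤ := (i : ℕ)
  have hθ : Function.Injective θ := fun i j h ↦ Fin.ext (Int.natCast_inj.1 h)
  obtain ⟨u, hu, hlabel⟩ := exists_weights_codeLabel_nodal_ne_zero hθ
  have hweight_unit : ∀ᶠ n in atTop, ∀ i, ∀ j, IsUnit (u i : ZMod (1 + n ! * j)) :=
    eventually_all.2 fun i ↦ eventually_isUnit_intCast_zmod (hu i)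
  have hsub_unit : ∀ᶠ n in atTop, ∀ i i' : Fin N, i ≠ i' → ∀ j,
      IsUnit ((θ i - θ i' : ℤ) : ZMod (1 + n ! * j)) :=
    eventually_all.2 fun i ↦ eventually_all.2 fun i' ↦ eventually_imp_distrib_left.2 fun h ↦
      eventually_isUnit_intCast_zmod (sub_ne_zero.2 (hθ.ne h))
  have hlabel_unit : ∀ᶠ n in atTop, ∀ M S : Finset (Fin N), ¬ S ⊆ M → ∀ j,
      IsUnit ((codeLabel θ u S (nodal M θ) : ℤ) : ZMod (1 + n ! * j)) :=
    eventually_all.2 fun M ↦ eventually_all.2 fun S ↦ eventually_imp_distrib_left.2 fun h ↦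
      eventually_isUnit_intCast_zmod (hlabel M S h)
  obtain ⟨n, hweight, hsub, hnodal⟩ := (hweight_unit.and (hsub_unit.and hlabel_unit)).exists
  refine ⟨n !, n.factorial_pos, u, fun j ↦ ⟨fun i ↦ hweight i j, fun i i' h ↦ ?_,
    fun M S hM hS hMS ↦ ?_⟩⟩
  · simpa [θ] using hsub i i' h j
  · have hSM : ¬ S ⊆ M := fun h ↦ hMS (eq_of_subset_of_card_le h (hM.trans hS.symm).le).symm
    simpa [θ, codeLabel_apply, eval_nodal] using hnodal M S hSM j

lemma exists_isCovering_fin {m t N : ℕ} (hm : 2 ≤ m) (ht : m ≤ t) (hN : t ≤ N) :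
    ∃ Δ > 0, ∀ j r, r ≤ N * (1 + Δ * j) ^ 2 ^ N → ∃ 𝓑 : Finset (Finset (Fin r)),
      IsCovering 𝓑 m t (codeDegree m t N (1 + Δ * j)
        ((1 + Δ * j) / (N - m).choose (t - m) + 1)) := by
  obtain ⟨Δ, hΔ, u, hgen⟩ := exists_isGeneric_zmod m N
  refine ⟨Δ, hΔ, fun j r hr ↦ ?_⟩
  have : NeZero (1 + Δ * j) := ⟨by omega⟩
  set k := 1 + Δ * j
  set L := k / (N - m).choose (t - m) + 1
  let A : Finset (ZMod k) := (range L).image Nat.cast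
  have hshift (M : Finset (Fin N)) (hM : #M = m) : ∃ c : Finset (Fin N) → ZMod k, ∀ x,
      ∃ T ∈ ({T ∈ powersetCard t univ | M ⊆ T} : Finset _), x - c T ∈ A := by
    refine exists_shift_forall_exists_sub_mem k L _ ?_
    rw [card_filter_powersetCard_subset _ _ _ (subset_univ M) (hM.trans_le ht), card_fin, hM]
    exact (Nat.lt_mul_of_div_lt (Nat.lt_succ_self _)
      (Nat.choose_pos (Nat.sub_le_sub_right hN m))).le
  choose! c hc using hshift
  have hcover := isCovering_codeCovering (A := A) (c := fun T M ↦ c M T) (hgen j) hm ht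
    fun M hM x ↦ by
      obtain ⟨T, hT, hTA⟩ := hc M hM x
      obtain ⟨hTc, hMT⟩ := mem_filter.1 hT
      exact ⟨T, hMT, mem_powersetCard_univ.1 hTc, hTA⟩
  obtain ⟨g⟩ : Nonempty (Fin r ↪ Fin N × (Finset (Fin N) → ZMod k)) :=
    Function.Embedding.nonempty_of_card_le (by simpa [ZMod.card] using hr)
  refine ⟨_, (hcover.preimage g).mono ?_⟩
  rw [Fintype.card_fin, ZMod.card]
  have hA : #A ≤ L := card_image_le.trans (card_range L).le
  unfold codeDegree
  gcongr

end Constants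

section Asymptotics

lemma choose_pred_mul_div_choose_add_one_le {m t N k : ℕ} (hm : 1 ≤ m) (ht : m ≤ t) (hN : t ≤ N)
    (hk : 0 < k) :
    ((N - 1).choose (t - 1) : ℝ) * ((k / (N - m).choose (t - m) + 1 : ℕ) : ℝ) ≤
      N ^ (m - 1) * k / ((m - 1)! * (t - 1).choose (m - 1)) *
        (1 + (N - m).choose (t - m) / k) := by
  set c := (N - m).choose (t - m)
  have hc : (0 : ℝ) < c := by exact_mod_cast Nat.choose_pos (Nat.sub_le_sub_right hN m)
  have ha : (0 : ℝ) < (t - 1).choose (m - 1) := by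
    exact_mod_cast Nat.choose_pos (Nat.sub_le_sub_right ht 1)
  have hchoose : ((N - 1).choose (t - 1) : ℝ) * (t - 1).choose (m - 1) =
      (N - 1).choose (m - 1) * c := by
    have h := Nat.choose_mul (n := N - 1) (k := t - 1) (s := m - 1) (by omega)
    rw [show N - 1 - (m - 1) = N - m by omega, show t - 1 - (m - 1) = t - m by omega] at h
    exact_mod_cast h
  calc ((N - 1).choose (t - 1) : ℝ) * ((k / c + 1 : ℕ) : ℝ)
      ≤ (N - 1).choose (t - 1) * (k / c + 1) := by
        push_cast
        gcongr
        exact Nat.cast_div_le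
    _ = (N - 1).choose (m - 1) * k / (t - 1).choose (m - 1) * (1 + c / k) := by
        rw [eq_div_of_mul_eq ha.ne' hchoose]
        field_simp
    _ ≤ (N ^ (m - 1) / (m - 1)!) * k / (t - 1).choose (m - 1) * (1 + c / k) := by
        gcongr
        refine (Nat.choose_le_pow_div _ _).trans ?_
        gcongr
        exact Nat.sub_le N 1
    _ = _ := by field_simp

lemma codeDegree_le {m t N k : ℕ} (hm : 2 ≤ m) (ht : m ≤ t) (hN : t ≤ N) (hk : 0 < k) :
    (codeDegree m t N k (k / (N - m).choose (t - m) + 1) : ℝ) ≤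
      (N * k ^ 2 ^ N : ℝ) ^ (m - 1) / ((m - 1)! * (t - 1).choose (m - 1)) *
        (1 + (N - m).choose (t - m) / k + (m - 1) * (m - 1)! * (t - 1).choose (m - 1) / N) := by
  obtain ⟨s, rfl⟩ : ∃ s, m = s + 2 := ⟨m - 2, by omega⟩
  have ha : (0 : ℝ) < (t - 1).choose (s + 1) := by
    exact_mod_cast Nat.choose_pos (by omega)
  have hN' : (0 : ℝ) < N := by exact_mod_cast (by omega : 0 < N)
  have hpow : (k : ℝ) * k ^ ((s + 1) * 2 ^ N - 1) = (k ^ 2 ^ N) ^ (s + 1) := by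
    rw [← pow_succ', Nat.sub_add_cancel (Nat.mul_pos s.succ_pos (by positivity)), mul_comm, pow_mul]
  have hcode := mul_le_mul_of_nonneg_right
    (choose_pred_mul_div_choose_add_one_le (by omega) ht hN hk)
    (by positivity : (0 : ℝ) ≤ k ^ ((s + 1) * 2 ^ N - 1))
  simp only [show s + 2 - 1 = s + 1 by omega] at hcode ⊢
  calc _ = ((N - 1).choose (t - 1) : ℝ) * ((k / (N - (s + 2)).choose (t - (s + 2)) + 1 : ℕ) : ℝ) *
          k ^ ((s + 1) * 2 ^ N - 1) + (N * k ^ 2 ^ N) ^ s * ((s + 1) * k ^ 2 ^ N) := by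
        simp only [codeDegree, Nat.add_sub_cancel, show s + 2 - 1 = s + 1 by omega]
        push_cast
        ring
    _ ≤ N ^ (s + 1) * k / ((s + 1)! * (t - 1).choose (s + 1)) *
            (1 + (N - (s + 2)).choose (t - (s + 2)) / k) * k ^ ((s + 1) * 2 ^ N - 1) +
          (N * k ^ 2 ^ N) ^ s * ((s + 1) * k ^ 2 ^ N) := by gcongr
    _ = N ^ (s + 1) * (k * k ^ ((s + 1) * 2 ^ N - 1)) / ((s + 1)! * (t - 1).choose (s + 1)) *
            (1 + (N - (s + 2)).choose (t - (s + 2)) / k) +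
          (N * k ^ 2 ^ N) ^ s * ((s + 1) * k ^ 2 ^ N) := by ring
    _ = _ := by
        rw [hpow]
        push_cast
        field_simp
        ring

lemma isEquivalent_choose_pred (s : ℕ) :
    (fun r : ℕ ↦ ((r - 1).choose s : ℝ)) ~[atTop] fun r ↦ (r : ℝ) ^ s / s ! := by
  have hpred : (fun r : ℕ ↦ ((r - 1 : ℕ) : ℝ)) ~[atTop] fun r ↦ (r : ℝ) := by
    refine (IsEquivalent.refl.sub_isLittleO
      (isLittleO_const_id_atTop (1 : ℝ)).natCast_atTop).congr_left ?_
    filter_upwards [eventually_ge_atTop 1] with r hr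
    simp [Nat.cast_sub hr]
  exact ((isEquivalent_choose s).comp_tendsto (tendsto_sub_atTop_nat 1)).trans
    ((hpred.pow s).div .refl)

/-- Take `1 + Δ * j r` just above the `d`-th root of `r / N`. -/
lemma exists_scale {N Δ d : ℕ} (hN : 0 < N) (hΔ : 0 < Δ) (hd : d ≠ 0) :
    ∃ j : ℕ → ℕ, Tendsto (fun r ↦ 1 + Δ * j r) atTop atTop ∧
      (∀ r, r ≤ N * (1 + Δ * j r) ^ d) ∧
      Tendsto (fun r : ℕ ↦ (N * (1 + Δ * j r : ℕ) ^ d : ℝ) / r) atTop (𝓝 1) := by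
  let x (r : ℕ) : ℝ := (r / N : ℝ) ^ (d⁻¹ : ℝ)
  have hN' : (0 : ℝ) < N := by exact_mod_cast hN
  have hΔ' : (0 : ℝ) < Δ := by exact_mod_cast hΔ
  have hx_pow (r : ℕ) : x r ^ d = r / N := Real.rpow_inv_natCast_pow (by positivity) hd
  have hx : Tendsto x atTop atTop := (tendsto_rpow_atTop (by positivity)).comp
    (tendsto_natCast_atTop_atTop.atTop_div_const hN')
  refine ⟨fun r ↦ ⌈(Δ : ℝ)⁻¹ * x r⌉₊, ?_, fun r ↦ ?_, ?_⟩
  · exact tendsto_atTop_mono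
      (fun r ↦ (Nat.le_mul_of_pos_left _ hΔ).trans (Nat.le_add_left _ 1))
      (tendsto_nat_ceil_atTop.comp (hx.const_mul_atTop (inv_pos.2 hΔ')))
  · have hle : x r ≤ 1 + Δ * ⌈(Δ : ℝ)⁻¹ * x r⌉₊ := by
      have := (inv_mul_le_iff₀ hΔ').1 (Nat.le_ceil ((Δ : ℝ)⁻¹ * x r))
      linarith
    have : (r : ℝ) ≤ N * (1 + Δ * ⌈(Δ : ℝ)⁻¹ * x r⌉₊) ^ d := by
      calc (r : ℝ) = N * x r ^ d := by rw [hx_pow, mul_div_cancel₀ _ hN'.ne']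
        _ ≤ _ := by gcongr
    exact_mod_cast this
  · have hceil : Tendsto (fun r ↦ (1 + Δ * ⌈(Δ : ℝ)⁻¹ * x r⌉₊ : ℝ) / x r) atTop (𝓝 1) := by
      have h := hx.inv_tendsto_atTop.add
        (((tendsto_nat_ceil_mul_div_atTop (inv_pos.2 hΔ').le).comp hx).const_mul (Δ : ℝ))
      rw [mul_inv_cancel₀ hΔ'.ne', zero_add] at h
      refine h.congr fun r ↦ ?_
      simp only [Pi.inv_apply, Function.comp_apply]
      ring
    have h := hceil.pow d
    rw [one_pow] at h
    refine h.congr fun r ↦ ?_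
    rw [div_pow, hx_pow]
    push_cast
    field_simp

lemma eventually_codeDegree_le {m t N : ℕ} (hm : 2 ≤ m) (ht : m ≤ t) (hN : t ≤ N) {q : ℕ → ℕ}
    (hq : Tendsto q atTop atTop)
    (hscale : Tendsto (fun r ↦ (N * q r ^ 2 ^ N : ℝ) / r) atTop (𝓝 1)) {ε : ℝ}
    (hε : (m - 1) * (m - 1)! * (t - 1).choose (m - 1) / N < ε) :
    ∀ᶠ r in atTop, (codeDegree m t N (q r) (q r / (N - m).choose (t - m) + 1) : ℝ) ≤
      (1 + ε) * ((r - 1).choose (m - 1) / (t - 1).choose (m - 1)) := by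
  have hchoose : ∀ᶠ r : ℕ in atTop, ((r - 1).choose (m - 1) : ℝ) ≠ 0 := by
    filter_upwards [eventually_ge_atTop m] with r hr
    exact_mod_cast (Nat.choose_pos (Nat.sub_le_sub_right hr 1)).ne'
  have hlim := ((hscale.pow (m - 1)).mul
    ((isEquivalent_iff_tendsto_one hchoose).1 (isEquivalent_choose_pred (m - 1)).symm)).mul
    ((((tendsto_natCast_atTop_atTop.comp hq).const_div_atTop
      ((N - m).choose (t - m) : ℝ)).const_add 1).add_const
      ((m - 1) * (m - 1)! * (t - 1).choose (m - 1) / N : ℝ))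
  rw [one_pow, add_zero, one_mul, one_mul] at hlim
  filter_upwards [hlim.eventually_lt_const ((add_lt_add_iff_left 1).2 hε), hchoose,
    hq.eventually_gt_atTop 0, eventually_ne_atTop 0] with r hr hb hqr hr0
  refine (codeDegree_le hm ht hN hqr).trans ?_
  refine (mul_le_mul_of_nonneg_right hr.le (by positivity)).trans_eq' ?_
  simp only [Pi.div_apply, Function.comp_apply, div_pow]
  field_simp

lemma eventually_exists_isCovering_le {m t : ℕ} (hm : 2 ≤ m) (ht : m ≤ t) {ε : ℝ} (hε : 0 < ε) :
    ∀ᶠ r : ℕ in atTop, ∃ (k : ℕ) (𝓑 : Finset (Finset (Fin r))), IsCovering 𝓑 m t k ∧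
      (k : ℝ) ≤ (1 + ε) * ((r - 1).choose (m - 1) / (t - 1).choose (m - 1)) := by
  obtain ⟨N, hNε, hN⟩ :=
    (((tendsto_const_div_atTop_nhds_zero_nat
      ((m - 1) * (m - 1)! * (t - 1).choose (m - 1) : ℝ)).eventually_lt_const hε).and
      (eventually_ge_atTop t)).exists
  obtain ⟨Δ, hΔ, hcover⟩ := exists_isCovering_fin hm ht hN
  obtain ⟨j, hj, hle, hscale⟩ := exists_scale (N := N) (d := 2 ^ N) (by omega) hΔ (by positivity)
  filter_upwards [eventually_codeDegree_le hm ht hN hj hscale hNε] with r hr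
  obtain ⟨𝓑, h𝓑⟩ := hcover (j r) r (hle r)
  exact ⟨_, 𝓑, h𝓑, hr⟩

end Asymptotics

theorem stmt7_general (m t : ℕ) (hm : 2 ≤ m) (ht : m ≤ t) (ℋ : Set Hyp)
    (hcomp : ∀ H ∈ ℋ, ∃ u, t < (hypComponent H u).ncard) (ε : ℝ) (hε : 0 < ε) :
    ∃ r₀ : ℕ, ∀ r : ℕ, r₀ ≤ r → (fHyper m r ℋ : ℝ) ≤
      (1 + ε) * ((Nat.choose (r - 1) (m - 1) : ℝ) / (Nat.choose (t - 1) (m - 1) : ℝ)) := by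
  obtain ⟨r₀, hr₀⟩ := eventually_atTop.1 (eventually_exists_isCovering_le hm ht hε)
  refine ⟨r₀, fun r hr ↦ ?_⟩
  obtain ⟨k, 𝓑, h𝓑, hk⟩ := hr₀ r hr
  exact (Nat.cast_le.2 (fHyper_le_of_isCovering h𝓑 hcomp)).trans hk

/-- Let `m ≥ 2`, `t ≥ m`, and let `ℋ` be a family of connected `m`-uniform hypergraphs
each having more than `t` vertices.  For every `ε > 0` and all sufficiently large `r`,
`f_m(r, ℋ) ≤ (1+ε)·binom(r−1,m−1)/binom(t−1,m−1)`. -/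
theorem stmt7 (m t : ℕ) (hm : 2 ≤ m) (ht : m ≤ t) (ℋ : Set Hyp)
    (hconn : ∀ H ∈ ℋ, HypConnected H)
    (huni : ∀ H ∈ ℋ, IsUniform m H.2)
    (hcard : ∀ H ∈ ℋ, t < H.1)
    (ε : ℝ) (hε : 0 < ε) :
    ∃ r₀ : ℕ, ∀ r : ℕ, r₀ ≤ r →
      (fHyper m r ℋ : ℝ)
        ≤ (1 + ε) * ((Nat.choose (r - 1) (m - 1) : ℝ) / (Nat.choose (t - 1) (m - 1) : ℝ)) := by
  refine stmt7_general m t hm ht ℋ (fun H hH ↦ ⟨⟨0, t.zero_le.trans_lt (hcard H hH)⟩, ?_⟩) ε hε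
  rw [Set.eq_univ_of_forall (s := hypComponent H _) (hconn H hH _), Set.ncard_univ, Nat.card_fin]
  exact hcard H hH
end
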